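/- Let A be a commutative Noetherian local ring which is a complete intersection: there exist a regular local ring S and a regular sequence x_1, …, x_c contained in the maximal ideal of S such that the completion of A with respect to its maximal ideal is isomorphic to S/(x_1, …, x_c). Let M and N be finitely generated A-modules such that the tensor product M ⊗_A N has finite length. Then either Tor_n^A(M, N) = 0 for all sufficiently large n, or there exists a non-negative integer m_0 such that Tor_n^A(M, N) ≠ 0 for all even integers n ≥ m_0, or Tor_n^A(M, N) ≠ 0 for all odd integers n ≥ m_0. -/

import Mathlib

open CategoryTheory

/-- The `n`-th Tor group of two `A`-modules, as an object of `ModuleCat A`. -/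
noncomputable abbrev torGroup (A : Type) [CommRing A] (M N : Type) [AddCommGroup M]
    [Module A M] [AddCommGroup N] [Module A N] (n : ℕ) : ModuleCat A :=
  ((Tor (ModuleCat A) n).obj (ModuleCat.of A M)).obj (ModuleCat.of A N)

/-!
A free resolution of `N`, base changed to `S/(x)` and lifted to a sequence of maps `d` of free
`S`-modules, satisfies `d² = ∑ xᵢ tᵢ`. The `tᵢ` commute with `d` modulo the `xᵢ`, and with one
another up to homotopy, so they act on `⨁ Torₙ(M, N)`, lowering degrees by two (Eisenbud's
operators).

The heart of the matter is the descending chain condition for submodules of `⨁ Torₙ(M, N)` stable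
under all the `tᵢ`, proved by induction on the number of `xᵢ`. Replacing `d` by the mapping cone of
multiplication by `x_c` along it removes `x_c` and `t_c` from the relation, and the homology of the
cone surjects onto `ker t_c`; since `t_c` is locally nilpotent, the chain condition passes from
`ker t_c` to everything. With no `xᵢ` left, `d` is a genuine differential over the regular ring `S`,
and finite projective dimension together with the finite length of `M ⊗ N` makes its homology with
coefficients in `M` Artinian.

By the chain condition, the classes killed by every `tᵢ` vanish in large degrees. If `Torₙ = 0` for
a large `n`, then every class in `Torₙ₊₂` is killed by every `tᵢ`, so `Torₙ₊₂ = 0`: vanishing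
propagates within each parity class.
-/

section RegularLocalRing

open IsLocalRing RingTheory.Sequence

variable {R : Type*} [CommRing R]

theorem exists_mem_maximalIdeal_notMem_sq_notMem_minimalPrimes [IsNoetherianRing R]
    [IsLocalRing R] (hdim : 0 < ringKrullDim R) :
    ∃ y ∈ maximalIdeal R, y ∉ maximalIdeal R ^ 2 ∧ ∀ p ∈ minimalPrimes R, y ∉ p := by
  classical
  have hfin := minimalPrimes.finite_of_isNoetherianRing R
  by_contra! hcon
  have hcover : (maximalIdeal R : Set R) ⊆
      ⋃ p ∈ (insert (maximalIdeal R ^ 2) hfin.toFinset : Finset (Ideal R)), (p : Set R) := by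
    intro y hy
    by_cases hy2 : y ∈ maximalIdeal R ^ 2
    · exact Set.mem_biUnion (by simp) hy2
    · obtain ⟨p, hp, hyp⟩ := hcon y hy hy2
      exact Set.mem_biUnion (by simp [hp]) hyp
  have hprime : ∀ p ∈ insert (maximalIdeal R ^ 2) hfin.toFinset,
      p ≠ maximalIdeal R ^ 2 → p ≠ maximalIdeal R ^ 2 → p.IsPrime := by
    intro p hp hne _
    have hp' : p ∈ minimalPrimes R := by simpa [hne] using hp
    exact hp'.1.1
  obtain ⟨p, hp, hle⟩ := (Ideal.subset_union_prime (f := id) _ _ hprime).mp hcover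
  rcases Finset.mem_insert.mp hp with rfl | hp
  · have hbot : maximalIdeal R = ⊥ :=
      Submodule.eq_bot_of_le_smul_of_le_jacobson_bot _ _ (IsNoetherian.noetherian _)
        (by rwa [smul_eq_mul, ← sq]) (maximalIdeal_le_jacobson _)
    exact hdim.ne' (ringKrullDim_eq_zero_of_isField (isField_iff_maximalIdeal_eq.mpr hbot))
  · have hp' : p ∈ minimalPrimes R := by simpa using hp
    have hpm : p = maximalIdeal R := le_antisymm (le_maximalIdeal hp'.1.1.ne_top) hle
    have hheight : (maximalIdeal R).height = 0 := Ideal.height_eq_zero_iff.mpr (hpm ▸ hp')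
    rw [← maximalIdeal_height_eq_ringKrullDim, hheight] at hdim
    exact lt_irrefl _ hdim

theorem exists_maximalIdeal_le_span_insert_erase [IsLocalRing R] [DecidableEq R] {s : Finset R}
    (hs : Ideal.span (s : Set R) = maximalIdeal R) {y : R} (hy : y ∈ maximalIdeal R)
    (hy2 : y ∉ maximalIdeal R ^ 2) :
    ∃ g ∈ s, maximalIdeal R ≤ Ideal.span {y} ⊔ Ideal.span (s.erase g : Set R) := by
  obtain ⟨a, -, rfl⟩ := Submodule.mem_span_finset.mp (show y ∈ Ideal.span (s : Set R) from hs ▸ hy)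
  obtain ⟨g, hg, hunit⟩ : ∃ g ∈ s, IsUnit (a g) := by
    by_contra! hcon
    refine hy2 (sq (maximalIdeal R) ▸ Ideal.sum_mem _ fun g hg ↦ Ideal.mul_mem_mul ?_ ?_)
    · exact (mem_maximalIdeal _).mpr (hcon g hg)
    · exact hs ▸ Submodule.subset_span hg
  refine ⟨g, hg, hs ▸ Ideal.span_le.mpr fun b hb ↦ ?_⟩
  have herase : ∀ b ∈ s.erase g, b ∈ Ideal.span {∑ i ∈ s, a i • i} ⊔
      Ideal.span (s.erase g : Set R) := fun b hb ↦ Ideal.mem_sup_right (Ideal.subset_span hb)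
  rcases eq_or_ne b g with rfl | hbg
  · refine ((Ideal.unit_mul_mem_iff_mem _ hunit).mp ?_)
    rw [← smul_eq_mul, eq_sub_of_add_eq (Finset.add_sum_erase s (fun i ↦ a i • i) hg)]
    exact sub_mem (Ideal.mem_sup_left (Ideal.mem_span_singleton_self _))
      (Submodule.sum_mem _ fun i hi ↦ Submodule.smul_mem _ _ (herase i hi))
  · exact herase b (Finset.mem_erase.mpr ⟨hbg, hb⟩)

theorem spanFinrank_maximalIdeal_quotient_span_singleton_lt [IsNoetherianRing R] [IsLocalRing R]
    {y : R} [IsLocalRing (R ⧸ Ideal.span {y})] (hy : y ∈ maximalIdeal R)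
    (hy2 : y ∉ maximalIdeal R ^ 2) :
    (maximalIdeal (R ⧸ Ideal.span {y})).spanFinrank < (maximalIdeal R).spanFinrank := by
  classical
  obtain ⟨s, hcard, hs⟩ := Submodule.FG.exists_span_finset_card_eq_spanFinrank
    (IsNoetherian.noetherian (maximalIdeal R))
  obtain ⟨g, hg, hle⟩ := exists_maximalIdeal_le_span_insert_erase hs hy hy2
  have hmax : maximalIdeal (R ⧸ Ideal.span {y}) =
      Ideal.span (Ideal.Quotient.mk (Ideal.span {y}) '' (s.erase g)) := by
    rw [← map_maximalIdeal_of_surjective _ (Ideal.Quotient.mk_surjective (I := Ideal.span {y})),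
      ← Ideal.map_span]
    refine le_antisymm ((Ideal.map_mono hle).trans ?_) (Ideal.map_mono ?_)
    · rw [Ideal.map_sup, Ideal.map_quotient_self, bot_sup_eq]
    · exact hs ▸ Ideal.span_mono (Finset.coe_subset.mpr (Finset.erase_subset g s))
  have hfin := Finset.finite_toSet (s.erase g)
  rw [hmax, ← hcard]
  calc _ ≤ (Ideal.Quotient.mk (Ideal.span {y}) '' (s.erase g)).ncard :=
        Submodule.spanFinrank_span_le_ncard_of_finite (hfin.image _)
    _ ≤ (s.erase g).card := (Set.ncard_image_le hfin).trans_eq (Set.ncard_coe_finset _)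
    _ < s.card := Finset.card_erase_lt_of_mem hg

theorem isLocalRing_quotient_span_singleton [IsLocalRing R] {y : R} (hy : y ∈ maximalIdeal R) :
    IsLocalRing (R ⧸ Ideal.span {y}) :=
  have : Nontrivial (R ⧸ Ideal.span {y}) :=
    Ideal.Quotient.nontrivial_iff.mpr fun h ↦
      (maximalIdeal.isMaximal R).ne_top (top_le_iff.mp (h ▸ Ideal.span_le.mpr (by simpa using hy)))
  .of_surjective' (Ideal.Quotient.mk _) Ideal.Quotient.mk_surjective

theorem isRegularLocalRing_quotient_span_singleton [IsRegularLocalRing R] {y : R}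
    (hy : y ∈ maximalIdeal R) (hy2 : y ∉ maximalIdeal R ^ 2) :
    IsRegularLocalRing (R ⧸ Ideal.span {y}) := by
  have := isLocalRing_quotient_span_singleton hy
  refine .of_spanFinrank_maximalIdeal_le _ ?_
  have hrank := spanFinrank_maximalIdeal_quotient_span_singleton_lt hy hy2
  have hdim := ringKrullDim_le_ringKrullDim_quotient_add_card ({y} : Finset R)
    (by rw [ringJacobson_eq_maximalIdeal]; simpa using hy)
  rw [← IsRegularLocalRing.spanFinrank_maximalIdeal, Finset.coe_singleton, Finset.card_singleton]
    at hdim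
  have hle : ((maximalIdeal (R ⧸ Ideal.span {y})).spanFinrank + 1 : WithBot ℕ∞) ≤
      (maximalIdeal R).spanFinrank := mod_cast hrank
  exact ENat.WithBot.add_le_add_natCast_right_iff.mp (hle.trans hdim)

theorem isDomain_of_isPrime_span_singleton [IsNoetherianRing R] [IsLocalRing R] {y : R}
    (hy : y ∈ maximalIdeal R) (hprime : (Ideal.span {y}).IsPrime)
    (hmin : ∀ p ∈ minimalPrimes R, y ∉ p) : IsDomain R := by
  obtain ⟨p, hp, hpy⟩ := Ideal.exists_minimalPrimes_le (bot_le : (⊥ : Ideal R) ≤ Ideal.span {y})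
  have hpp : p.IsPrime := hp.1.1
  have hle : p ≤ maximalIdeal R • p := fun a ha ↦ by
    obtain ⟨b, rfl⟩ := Ideal.mem_span_singleton'.mp (hpy ha)
    exact mul_comm y b ▸ Submodule.smul_mem_smul hy
      ((hpp.mem_or_mem ha).resolve_right (hmin p hp))
  have hbot : p = ⊥ := Submodule.eq_bot_of_le_smul_of_le_jacobson_bot _ p
    (IsNoetherian.noetherian _) hle (maximalIdeal_le_jacobson _)
  exact IsDomain.of_bot_isPrime R (hbp := hbot ▸ hpp)

theorem isWeaklyRegular_cons_of_map_quotient {y : R} (hy : IsSMulRegular R y) {rs : List R}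
    (hrs : IsWeaklyRegular (R ⧸ Ideal.span {y}) (rs.map (Ideal.Quotient.mk (Ideal.span {y})))) :
    IsWeaklyRegular R (y :: rs) := by
  refine (isWeaklyRegular_cons_iff ..).mpr ⟨hy, ?_⟩
  have hquot := (isWeaklyRegular_map_algebraMap_iff (R := R) (R ⧸ Ideal.span {y})
    (R ⧸ Ideal.span {y}) rs).mp hrs
  refine ((Submodule.quotEquivOfEq _ _ ?_).isWeaklyRegular_congr rs).mp hquot
  rw [← Submodule.ideal_span_singleton_smul, smul_eq_mul, Ideal.mul_top]

theorem isDomain_and_exists_isWeaklyRegular_ofList_eq_maximalIdeal (n : ℕ) (R : Type*) [CommRing R]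
    [IsRegularLocalRing R] (hn : (maximalIdeal R).spanFinrank = n) :
    IsDomain R ∧ ∃ rs : List R, IsWeaklyRegular R rs ∧ Ideal.ofList rs = maximalIdeal R := by
  induction n using Nat.strong_induction_on generalizing R with | _ n ih
  rcases n.eq_zero_or_pos with rfl | hpos
  · have hbot := (Submodule.spanFinrank_eq_zero_iff_eq_bot (IsNoetherian.noetherian _)).mp hn
    exact ⟨(isField_iff_maximalIdeal_eq.mpr hbot).isDomain, [], .nil R R, by simp [hbot]⟩
  have hdim : 0 < ringKrullDim R := by
    rw [← IsRegularLocalRing.spanFinrank_maximalIdeal, hn]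
    exact_mod_cast hpos
  obtain ⟨y, hy, hy2, hmin⟩ := exists_mem_maximalIdeal_notMem_sq_notMem_minimalPrimes hdim
  have := isRegularLocalRing_quotient_span_singleton hy hy2
  obtain ⟨hdom, rs, hrs, hspan⟩ := ih _
    (hn ▸ spanFinrank_maximalIdeal_quotient_span_singleton_lt hy hy2) (R ⧸ Ideal.span {y}) rfl
  have hR := isDomain_of_isPrime_span_singleton hy ((Ideal.Quotient.isDomain_iff_prime _).mp hdom)
    hmin
  obtain ⟨rs, rfl⟩ := List.map_surjective_iff.mpr (Ideal.Quotient.mk_surjective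
    (I := Ideal.span {y})) rs
  have hy0 : y ≠ 0 := fun h ↦ hy2 (h ▸ zero_mem _)
  refine ⟨hR, y :: rs, isWeaklyRegular_cons_of_map_quotient
    (IsSMulRegular.of_right_eq_zero_of_smul fun _ h ↦ (mul_eq_zero.mp h).resolve_left hy0) hrs, ?_⟩
  rw [← Ideal.map_ofList, ← map_maximalIdeal_of_surjective _ Ideal.Quotient.mk_surjective] at hspan
  have hcomap := congrArg (Ideal.comap (Ideal.Quotient.mk (Ideal.span {y}))) hspan
  rw [Ideal.comap_map_of_surjective' _ Ideal.Quotient.mk_surjective,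
    Ideal.comap_map_of_surjective' _ Ideal.Quotient.mk_surjective, Ideal.mk_ker] at hcomap
  rw [Ideal.ofList_cons, sup_comm, hcomap, sup_eq_left]
  exact Ideal.span_le.mpr (by simpa using hy)

theorem exists_isWeaklyRegular_ofList_eq_maximalIdeal [IsRegularLocalRing R] :
    ∃ rs : List R, IsWeaklyRegular R rs ∧ Ideal.ofList rs = maximalIdeal R :=
  (isDomain_and_exists_isWeaklyRegular_ofList_eq_maximalIdeal _ R rfl).2

end RegularLocalRing

section FiniteProjectiveDimension

open IsLocalRing RingTheory.Sequence

theorem lTensor_quotient_injective {R M N : Type*} [CommRing R] [AddCommGroup M] [Module R M]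
    [AddCommGroup N] [Module R N] {I : Ideal R} {f : M →ₗ[R] N}
    (hf : ∀ m, f m ∈ I • (⊤ : Submodule R N) → m ∈ I • (⊤ : Submodule R M)) :
    Function.Injective (f.lTensor (R ⧸ I)) := by
  refine (injective_iff_map_eq_zero _).mpr fun z hz ↦ ?_
  obtain ⟨m, rfl⟩ := TensorProduct.mk_surjective R M (R ⧸ I) Ideal.Quotient.mk_surjective z
  have hmem : f m ∈ LinearMap.ker (TensorProduct.mk R (R ⧸ I) N 1) := hz
  rw [LinearMap.ker_tensorProductMk] at hmem
  have hm := hf m hmem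
  rwa [← LinearMap.ker_tensorProductMk] at hm

variable {R : Type*} [CommRing R]

theorem free_of_isWeaklyRegular_of_ofList_eq_maximalIdeal [IsNoetherianRing R] [IsLocalRing R]
    {M : Type*} [AddCommGroup M] [Module R M] [Module.Finite R M] {rs : List R}
    (hrs : IsWeaklyRegular M rs) (hspan : Ideal.ofList rs = maximalIdeal R) : Module.Free R M := by
  obtain ⟨n, g, hg⟩ := Module.Finite.exists_fin' R M
  have hexact := LinearMap.exact_subtype_ker_map g
  refine Module.free_of_lTensor_residueField_injective _ g hg hexact
    (lTensor_quotient_injective fun k hk ↦ ?_)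
  have hzero : Function.Exact (0 : PUnit →ₗ[R] LinearMap.ker g) (LinearMap.ker g).subtype := by
    rw [LinearMap.exact_zero_iff_injective]
    exact Subtype.val_injective
  have hmapQ := map_first_exact_on_four_term_right_exact_of_isSMulRegular_last hzero hexact hg hrs
  rw [← hspan] at hk ⊢
  obtain ⟨z, hz⟩ := (hmapQ (Submodule.Quotient.mk k)).mp ((Submodule.Quotient.mk_eq_zero _).mpr hk)
  rw [← Submodule.Quotient.mk_eq_zero, ← hz]
  obtain ⟨z, rfl⟩ := Submodule.Quotient.mk_surjective _ z
  exact (Submodule.Quotient.mk_eq_zero _).mpr (zero_mem _)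

theorem injective_quotSMulTop_map_of_exact {K F M : Type*} [AddCommGroup K] [Module R K]
    [AddCommGroup F] [Module R F] [AddCommGroup M] [Module R M] {r : R} (hr : IsSMulRegular M r)
    {i : K →ₗ[R] F} {p : F →ₗ[R] M} (hi : Function.Injective i) (hexact : Function.Exact i p) :
    Function.Injective (QuotSMulTop.map r i) := by
  have hmap := QuotSMulTop.map_first_exact_on_four_term_exact_of_isSMulRegular_last
    (f₁ := (0 : PUnit →ₗ[R] K)) (by rwa [LinearMap.exact_zero_iff_injective]) hexact hr
  rwa [map_zero, LinearMap.exact_zero_iff_injective] at hmap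

theorem isWeaklyRegular_concat_of_exact {K F M : Type*} [AddCommGroup K] [Module R K]
    [AddCommGroup F] [Module R F] [AddCommGroup M] [Module R M] {rs : List R} {r : R}
    (hM : IsWeaklyRegular M rs) {i : K →ₗ[R] F} {p : F →ₗ[R] M} (hi : Function.Injective i)
    (hexact : Function.Exact i p) (hp : Function.Surjective p)
    (hF : IsWeaklyRegular F (rs ++ [r])) : IsWeaklyRegular K (rs ++ [r]) := by
  induction hM generalizing K F with
  | nil =>
    rw [List.nil_append, isWeaklyRegular_singleton_iff] at hF ⊢
    exact hF.of_injective i hi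
  | cons s rs hs _ ih =>
    rw [List.cons_append, isWeaklyRegular_cons_iff] at hF ⊢
    exact ⟨hF.1.of_injective i hi, ih (injective_quotSMulTop_map_of_exact hs hi hexact)
      (QuotSMulTop.map_exact s hexact hp) (QuotSMulTop.map_surjective s hp) hF.2⟩

/-- Finitely generated modules over a regular local ring have finite projective dimension, in the
form of an induction principle. -/
theorem regularLocalRing_module_induction.{u} {R : Type u} [CommRing R] [IsRegularLocalRing R]
    {P : ∀ (M : Type u) [AddCommGroup M] [Module R M], Prop}
    (free : ∀ (M : Type u) [AddCommGroup M] [Module R M] [Module.Finite R M] [Module.Free R M], P M)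
    (ker : ∀ (M : Type u) [AddCommGroup M] [Module R M] (n : ℕ) (f : (Fin n → R) →ₗ[R] M),
      Function.Surjective f → P (LinearMap.ker f) → P M)
    (M : Type u) [AddCommGroup M] [Module R M] [Module.Finite R M] : P M := by
  obtain ⟨ys, hys, hspan⟩ := exists_isWeaklyRegular_ofList_eq_maximalIdeal (R := R)
  suffices h : ∀ (bs as : List R), as ++ bs = ys → ∀ (M : Type u) [AddCommGroup M] [Module R M]
      [Module.Finite R M], IsWeaklyRegular M as → P M from h ys [] rfl M (.nil R M)
  intro bs
  induction bs with
  | nil =>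
    intro as has M _ _ _ hM
    rw [List.append_nil] at has
    have := free_of_isWeaklyRegular_of_ofList_eq_maximalIdeal hM (has ▸ hspan)
    exact free M
  | cons b bs ih =>
    intro as has M _ _ _ hM
    obtain ⟨n, f, hf⟩ := Module.Finite.exists_fin' R M
    have hfree : IsWeaklyRegular (Fin n → R) (as ++ [b]) := by
      rw [← has, List.append_cons, isWeaklyRegular_append_iff] at hys
      exact ((TensorProduct.rid R (Fin n → R)).isWeaklyRegular_congr _).mp
        hys.1.isWeaklyRegular_lTensor
    exact ker M n f hf (ih (as ++ [b]) (by simpa using has) _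
      (isWeaklyRegular_concat_of_exact hM Subtype.val_injective
        (LinearMap.exact_subtype_ker_map f) hf hfree))

end FiniteProjectiveDimension

section DifferentialHomology

variable {R X Y Z : Type*} [CommRing R] [AddCommGroup X] [Module R X] [AddCommGroup Y] [Module R Y]
  [AddCommGroup Z] [Module R Z]

/-- The homology `ker d / im d` of a differential module `(X, d)`. No grading is imposed, so a
complex is treated as the direct sum of its terms; for `d` with `d ∘ d ≠ 0` this is
`ker d / (ker d ∩ im d)`. -/
abbrev DifferentialHomology (d : Module.End R X) : Type _ :=
  LinearMap.ker d ⧸ (LinearMap.range d).submoduleOf (LinearMap.ker d)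

namespace DifferentialHomology

variable {d : Module.End R X} {dY : Module.End R Y} {dZ : Module.End R Z}

/-- The homology class of a cycle `z`. -/
def cls (z : X) (hz : d z = 0) : DifferentialHomology d :=
  Submodule.Quotient.mk ⟨z, hz⟩

theorem exists_cls_eq (h : DifferentialHomology d) : ∃ z, ∃ hz : d z = 0, cls z hz = h := by
  obtain ⟨⟨z, hz⟩, rfl⟩ := Submodule.Quotient.mk_surjective _ h
  exact ⟨z, hz, rfl⟩

theorem cls_eq_cls_iff {z w : X} {hz : d z = 0} {hw : d w = 0} :
    cls z hz = cls w hw ↔ ∃ b, d b = z - w :=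
  Submodule.Quotient.eq _

theorem cls_eq_zero_iff {z : X} {hz : d z = 0} : cls z hz = 0 ↔ ∃ b, d b = z :=
  Submodule.Quotient.mk_eq_zero _

/-- The map induced on homology by a map of differential modules. -/
def map (f : X →ₗ[R] Y) (hf : ∀ x, f (d x) = dY (f x)) :
    DifferentialHomology d →ₗ[R] DifferentialHomology dY :=
  Submodule.mapQ _ _
    (f.restrict fun z hz ↦ by rw [LinearMap.mem_ker] at hz ⊢; rw [← hf, hz, map_zero])
    (by rintro ⟨_, _⟩ ⟨b, rfl⟩; exact ⟨f b, (hf b).symm⟩)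

@[simp]
theorem map_cls (f : X →ₗ[R] Y) (hf : ∀ x, f (d x) = dY (f x)) (z : X) (hz : d z = 0) :
    map f hf (cls z hz) = cls (f z) (by rw [← hf, hz, map_zero]) :=
  rfl

theorem map_eq_map_of_homotopy {f g : X →ₗ[R] Y} {hf : ∀ x, f (d x) = dY (f x)}
    {hg : ∀ x, g (d x) = dY (g x)} (s : X →ₗ[R] Y) (hs : ∀ x, f x - g x = dY (s x) + s (d x)) :
    map f hf = map g hg := by
  refine LinearMap.ext fun h ↦ ?_
  obtain ⟨z, hz, rfl⟩ := exists_cls_eq h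
  rw [map_cls, map_cls, cls_eq_cls_iff]
  exact ⟨s z, by rw [hs, hz, map_zero, add_zero]⟩

theorem map_bijective_of_acyclic_ker {f : X →ₗ[R] Y} (hf : ∀ x, f (d x) = dY (f x))
    (hd : ∀ x, d (d x) = 0) (hsurj : Function.Surjective f)
    (hker : ∀ z, f z = 0 → d z = 0 → ∃ b, f b = 0 ∧ d b = z) : Function.Bijective (map f hf) := by
  refine ⟨(injective_iff_map_eq_zero _).mpr fun h hh ↦ ?_, fun h ↦ ?_⟩
  · obtain ⟨z, hz, rfl⟩ := exists_cls_eq h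
    rw [map_cls, cls_eq_zero_iff] at hh
    obtain ⟨b, hb⟩ := hh
    obtain ⟨b, rfl⟩ := hsurj b
    obtain ⟨b', -, hb'⟩ := hker (z - d b) (by rw [map_sub, hf, hb, sub_self])
      (by rw [map_sub, hz, hd, sub_zero])
    exact cls_eq_zero_iff.mpr ⟨b + b', by rw [map_add, hb', add_sub_cancel]⟩
  · obtain ⟨w, hw, rfl⟩ := exists_cls_eq h
    obtain ⟨z, rfl⟩ := hsurj w
    obtain ⟨b, hb, hdb⟩ := hker (d z) (by rw [hf, hw]) (hd z)
    refine ⟨cls (z - b) (by rw [map_sub, hdb, sub_self]), ?_⟩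
    simp only [map_cls, map_sub, hb, sub_zero]

theorem exact_map_map {i : X →ₗ[R] Y} {p : Y →ₗ[R] Z} (hi : ∀ x, i (d x) = dY (i x))
    (hp : ∀ y, p (dY y) = dZ (p y)) (hd : ∀ y, dY (dY y) = 0) (hinj : Function.Injective i)
    (hexact : Function.Exact i p) (hsurj : Function.Surjective p) :
    Function.Exact (map i hi) (map p hp) := by
  intro h
  obtain ⟨z, hz, rfl⟩ := exists_cls_eq h
  constructor
  · intro hh
    rw [map_cls, cls_eq_zero_iff] at hh
    obtain ⟨b, hb⟩ := hh
    obtain ⟨b, rfl⟩ := hsurj b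
    obtain ⟨x, hx⟩ := (hexact (z - dY b)).mp (by rw [map_sub, hp, hb, sub_self])
    have hdx : d x = 0 := hinj (by rw [hi, hx, map_sub, hz, hd, sub_zero, map_zero])
    exact ⟨cls x hdx, (map_cls ..).trans (cls_eq_cls_iff.mpr ⟨-b, by rw [map_neg, hx]; abel⟩)⟩
  · rintro ⟨h, hh⟩
    obtain ⟨x, hx, rfl⟩ := exists_cls_eq h
    rw [← hh, map_cls, map_cls]
    exact cls_eq_zero_iff.mpr ⟨0, by rw [map_zero, hexact.apply_apply_eq_zero]⟩

end DifferentialHomology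

end DifferentialHomology

section StableDCC

variable {R H H' : Type*} [CommRing R] [AddCommGroup H] [Module R H] [AddCommGroup H'] [Module R H']
  {ι κ : Type*}

/-- The descending chain condition for submodules stable under a family of operators. For commuting
operators `t i` this says that `H` is Artinian over the polynomial ring `R[t]`. -/
def StableDCC (t : ι → Module.End R H) : Prop :=
  ∀ U : ℕ → Submodule R H, Antitone U → (∀ k i, U k ∈ (t i).invtSubmodule) →
    ∃ K, ∀ k ≥ K, U k = U K

theorem stableDCC_of_isArtinian [IsArtinian R H] (t : ι → Module.End R H) : StableDCC t :=
  fun U hU _ ↦ (IsArtinian.monotone_stabilizes ⟨U, hU⟩).imp fun _ hK k hk ↦ (hK k hk).symm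

theorem StableDCC.of_surjective {T : ι → Module.End R H'} (hT : StableDCC T)
    {t : ι → Module.End R H} {f : H' →ₗ[R] H} (hf : Function.Surjective f)
    (hcomm : ∀ i h, f (T i h) = t i (f h)) : StableDCC t := by
  intro U hU hUt
  obtain ⟨K, hK⟩ := hT (fun k ↦ (U k).comap f) (fun _ _ hkl ↦ Submodule.comap_mono (hU hkl))
    fun k i h hh ↦ by
      simpa only [Submodule.mem_comap, hcomm] using hUt k i hh
  exact ⟨K, fun k hk ↦ Submodule.comap_injective_of_surjective hf (hK k hk)⟩

theorem StableDCC.exists_forall_ge_forall_eq {t : ι → Module.End R H} (ht : StableDCC t)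
    {V : ℕ → ℕ → Submodule R H} (hk : ∀ j, Antitone (V · j)) (hj : ∀ k, Antitone (V k))
    (hV : ∀ k j i, V k j ∈ (t i).invtSubmodule) : ∃ K, ∀ k ≥ K, ∀ j, V k j = V K j := by
  obtain ⟨D, hD⟩ := ht (fun k ↦ V k k) (fun k l h ↦ (hk l h).trans (hj k h)) fun k i ↦ hV k k i
  choose L hL using fun j ↦ ht (V · j) (hk j) fun k i ↦ hV k j i
  have hlarge : ∀ k ≥ D, ∀ j ≥ D, V k j = V D D := fun k hkD j hjD ↦
    le_antisymm ((hk j hkD).trans (hj D hjD)) <|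
      (hD _ (hkD.trans (le_max_left k j))).ge.trans <|
        (hk _ (le_max_left k j)).trans (hj k (le_max_right k j))
  have hLD : ∀ j < D, L j ≤ (Finset.range D).sup L := fun j hjD ↦
    Finset.le_sup (Finset.mem_range.mpr hjD)
  refine ⟨max D ((Finset.range D).sup L), fun k hkK j ↦ ?_⟩
  rcases lt_or_ge j D with hjD | hjD
  · exact (hL j k ((hLD j hjD).trans ((le_max_right _ _).trans hkK))).trans
      (hL j _ ((hLD j hjD).trans (le_max_right _ _))).symm
  · rw [hlarge k ((le_max_left _ _).trans hkK) j hjD, hlarge _ (le_max_left _ _) j hjD]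

theorem le_of_map_pow_inf_ker_le {τ : Module.End R H} (hτ : ∀ h, ∃ n, (τ ^ n) h = 0)
    {U V : Submodule R H} (hVU : V ≤ U)
    (hinf : ∀ j, U.map (τ ^ j) ⊓ LinearMap.ker τ ≤ V.map (τ ^ j)) : U ≤ V := by
  suffices h : ∀ n, ∀ u ∈ U, (τ ^ n) u = 0 → u ∈ V from
    fun u hu ↦ (hτ u).elim fun n hn ↦ h n u hu hn
  intro n
  induction n with
  | zero => intro u _ h0; exact (show u = 0 from h0) ▸ zero_mem V
  | succ n ih =>
    intro u hu hn
    obtain ⟨v, hv, hvu⟩ := hinf n ⟨⟨u, hu, rfl⟩,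
      show (τ * τ ^ n) u = 0 by rwa [← pow_succ']⟩
    have hsub := ih (u - v) (sub_mem hu (hVU hv)) (by rw [map_sub, hvu, sub_self])
    simpa using add_mem hsub hv

/-- A dual of Hilbert's basis theorem: `H` inherits the chain condition from the kernel of a locally
nilpotent operator. -/
theorem StableDCC.of_range_eq_ker {T : ι → Module.End R H'} (hT : StableDCC T)
    {t : κ → Module.End R H} (e : ι → κ) (k₀ : κ) {π : H' →ₗ[R] H}
    (hπ : ∀ i h, π (T i h) = t (e i) (π h)) (hrange : LinearMap.range π = LinearMap.ker (t k₀))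
    (hcomm : ∀ i, Commute (t (e i)) (t k₀)) (hnil : ∀ h, ∃ n, (t k₀ ^ n) h = 0) :
    StableDCC t := by
  intro U hU hUt
  have hdesc (k j) : (U k).map (t k₀ ^ (j + 1)) ≤ (U k).map (t k₀ ^ j) := by
    rintro _ ⟨u, hu, rfl⟩
    exact ⟨t k₀ u, hUt k k₀ hu, by rw [← Module.End.mul_apply, ← pow_succ]⟩
  have hstable (k j i) : ((U k).map (t k₀ ^ j)).comap π ∈ (T i).invtSubmodule := by
    rintro h ⟨u, hu, hut⟩
    refine ⟨t (e i) u, hUt k (e i) hu, ?_⟩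
    rw [hπ, ← hut, ← Module.End.mul_apply, ← Module.End.mul_apply, ((hcomm i).pow_right j).eq]
  obtain ⟨K, hK⟩ := hT.exists_forall_ge_forall_eq
    (V := fun k j ↦ ((U k).map (t k₀ ^ j)).comap π)
    (fun j k l h ↦ Submodule.comap_mono (Submodule.map_mono (hU h)))
    (fun k ↦ antitone_nat_of_succ_le fun j ↦ Submodule.comap_mono (hdesc k j)) hstable
  refine ⟨K, fun k hk ↦ (hU hk).antisymm (le_of_map_pow_inf_ker_le hnil (hU hk) fun j u hu ↦ ?_)⟩
  obtain ⟨h, rfl⟩ := hrange.ge hu.2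
  exact (hK k hk j).ge hu.1

end StableDCC

section FlatDifferentialModule

variable {R : Type*} [CommRing R] {J : Ideal R}

/-- Finitely generated modules killed by a power of `J`. -/
def IsFinitePowTorsion (J : Ideal R) (H : Type*) [AddCommGroup H] [Module R H] : Prop :=
  Module.Finite R H ∧ ∃ k, J ^ k ≤ Module.annihilator R H

namespace IsFinitePowTorsion

variable {A B C : Type*} [AddCommGroup A] [Module R A] [AddCommGroup B] [Module R B]
  [AddCommGroup C] [Module R C]

theorem of_exact [IsNoetherianRing R] {f : A →ₗ[R] B} {g : B →ₗ[R] C} (hA : IsFinitePowTorsion J A)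
    (hC : IsFinitePowTorsion J C) (h : Function.Exact f g) : IsFinitePowTorsion J B := by
  obtain ⟨_, k, hk⟩ := hA
  obtain ⟨_, l, hl⟩ := hC
  have := isNoetherian_of_range_eq_ker f g h.linearMap_ker_eq.symm
  refine ⟨inferInstance, k + l, ?_⟩
  rw [pow_add, Ideal.mul_le]
  refine fun r hr s hs ↦ Module.mem_annihilator.mpr fun b ↦ ?_
  obtain ⟨a, ha⟩ := (h (s • b)).mp (by rw [map_smul, Module.mem_annihilator.mp (hl hs)])
  rw [mul_smul, ← ha, ← map_smul, Module.mem_annihilator.mp (hk hr), map_zero]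

theorem congr (hA : IsFinitePowTorsion J A) (e : A ≃ₗ[R] B) : IsFinitePowTorsion J B :=
  ⟨have := hA.1; .equiv e, hA.2.imp fun _ hk ↦ hk.trans e.annihilator_eq.le⟩

theorem of_injective [IsNoetherianRing R] (hB : IsFinitePowTorsion J B) {f : A →ₗ[R] B}
    (hf : Function.Injective f) : IsFinitePowTorsion J A :=
  ⟨have := hB.1; .of_injective f hf,
    hB.2.imp fun _ hk ↦ hk.trans (LinearMap.annihilator_le_of_injective f hf)⟩

theorem pi {ι : Type*} [Finite ι] (hA : IsFinitePowTorsion J A) : IsFinitePowTorsion J (ι → A) := by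
  obtain ⟨_, k, hk⟩ := hA
  exact ⟨inferInstance, k, fun r hr ↦ Module.mem_annihilator.mpr fun a ↦
    funext fun j ↦ Module.mem_annihilator.mp (hk hr) (a j)⟩

end IsFinitePowTorsion

variable {A B C : Type*} [AddCommGroup A] [Module R A] [AddCommGroup B] [Module R B]
  [AddCommGroup C] [Module R C] {dA : Module.End R A} {dB : Module.End R B} {dC : Module.End R C}
  {i : A →ₗ[R] B} {p : B →ₗ[R] C}

theorem DifferentialHomology.isFinitePowTorsion_neg
    (h : IsFinitePowTorsion J (DifferentialHomology dA)) :
    IsFinitePowTorsion J (DifferentialHomology (-dA)) := by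
  unfold DifferentialHomology
  rwa [LinearMap.range_neg, LinearMap.ker_neg]

theorem DifferentialHomology.isFinitePowTorsion_of_shortExact [IsNoetherianRing R]
    (hi : ∀ a, i (dA a) = dB (i a)) (hp : ∀ b, p (dB b) = dC (p b))
    (hdA : ∀ a, dA (dA a) = 0) (hdB : ∀ b, dB (dB b) = 0) (hinj : Function.Injective i)
    (hexact : Function.Exact i p) (hsurj : Function.Surjective p)
    (hA : IsFinitePowTorsion J (DifferentialHomology dA))
    (hB : IsFinitePowTorsion J (DifferentialHomology dB)) :
    IsFinitePowTorsion J (DifferentialHomology dC) := by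
  let cone : Module.End R (A × B) := (-(dA ∘ₗ .fst R A B)).prod (i.coprod dB)
  have hcone (z) : cone z = (-dA z.1, i z.1 + dB z.2) := rfl
  have hcone_sq (z) : cone (cone z) = 0 := by
    simp only [hcone, map_neg, map_add, hdA, hdB, hi, neg_zero, add_zero, neg_add_cancel,
      Prod.mk_zero_zero]
  have hquasi := map_bijective_of_acyclic_ker (f := p ∘ₗ .snd R A B) (dY := dC)
    (fun z ↦ by simp [hcone, hp, hexact.apply_apply_eq_zero]) hcone_sq
    (fun c ↦ (hsurj c).imp' (Prod.mk 0) fun _ ↦ id) fun ⟨a, b⟩ hpb hz ↦ by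
      obtain ⟨a', rfl⟩ := (hexact b).mp hpb
      have ha' : a + dA a' = 0 := hinj <| by
        rw [map_add, hi, map_zero]; exact congrArg Prod.snd hz
      refine ⟨(a', 0), map_zero p, Prod.ext ?_ ?_⟩
      · exact (eq_neg_of_add_eq_zero_left ha').symm
      · simp [hcone]
  have hmiddle := exact_map_map (d := dB) (dY := cone) (dZ := -dA) (i := .inr R A B)
    (p := .fst R A B) (fun b ↦ by simp [hcone]) (fun _ ↦ rfl) hcone_sq LinearMap.inr_injective
    .inr_fst LinearMap.fst_surjective
  exact (hB.of_exact (isFinitePowTorsion_neg hA) hmiddle).congr (.ofBijective _ hquasi)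

theorem rTensor_lTensor_apply (f : A →ₗ[R] B) (g : C →ₗ[R] C) (z : TensorProduct R A C) :
    f.rTensor C (g.lTensor A z) = g.lTensor B (f.rTensor C z) := by
  rw [← LinearMap.comp_apply, LinearMap.rTensor_comp_lTensor, ← LinearMap.lTensor_comp_rTensor,
    LinearMap.comp_apply]

theorem DifferentialHomology.isFinitePowTorsion_lTensor_of_free [IsNoetherianRing R]
    (h : IsFinitePowTorsion J (DifferentialHomology dA)) (M : Type*) [AddCommGroup M] [Module R M]
    [Module.Finite R M] [Module.Free R M] :
    IsFinitePowTorsion J (DifferentialHomology (dA.lTensor M)) := by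
  let b := Module.Free.chooseBasis R M
  let coord (j) : TensorProduct R M A →ₗ[R] A := TensorProduct.lid R A ∘ₗ (b.coord j).rTensor A
  have hcoord (j z) : coord j (dA.lTensor M z) = dA (coord j z) := by
    induction z with
    | zero => simp only [map_zero]
    | tmul m a => simp [coord]
    | add z w hz hw => simp only [map_add, hz, hw]
  have hsum (z) : ∑ j, b j ⊗ₜ[R] coord j z = z := by
    induction z with
    | zero => simp only [map_zero, TensorProduct.tmul_zero, Finset.sum_const_zero]
    | tmul m a =>
      simp only [coord, LinearMap.comp_apply, LinearMap.rTensor_tmul, LinearEquiv.coe_coe,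
        TensorProduct.lid_tmul, ← TensorProduct.smul_tmul, ← TensorProduct.sum_tmul,
        Module.Basis.coord_apply, b.sum_repr]
    | add z w hz hw => simp only [map_add, TensorProduct.tmul_add, Finset.sum_add_distrib, hz, hw]
  refine h.pi.of_injective (f := .pi fun j ↦ map (coord j) (hcoord j))
    ((injective_iff_map_eq_zero _).mpr fun c hc ↦ ?_)
  obtain ⟨z, hz, rfl⟩ := exists_cls_eq c
  have hbdry (j) : ∃ a, dA a = coord j z := cls_eq_zero_iff.mp (congrFun hc j)
  choose a ha using hbdry
  refine cls_eq_zero_iff.mpr ⟨∑ j, b j ⊗ₜ a j, ?_⟩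
  simp only [map_sum, LinearMap.lTensor_tmul, ha, hsum]

theorem DifferentialHomology.isFinitePowTorsion_lTensor.{u} {R : Type u} [CommRing R]
    [IsRegularLocalRing R] {J : Ideal R} {G : Type*} [AddCommGroup G] [Module R G] [Module.Flat R G]
    {d : Module.End R G} (hd : d ∘ₗ d = 0) (h : IsFinitePowTorsion J (DifferentialHomology d))
    (M : Type u) [AddCommGroup M] [Module R M] [Module.Finite R M] :
    IsFinitePowTorsion J (DifferentialHomology (d.lTensor M)) := by
  have hsq (M : Type u) [AddCommGroup M] [Module R M] (z) : d.lTensor M (d.lTensor M z) = 0 := by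
    rw [← LinearMap.lTensor_comp_apply, hd, LinearMap.lTensor_zero, LinearMap.zero_apply]
  let P (M : Type u) [AddCommGroup M] [Module R M] : Prop :=
    IsFinitePowTorsion J (DifferentialHomology (d.lTensor M))
  refine regularLocalRing_module_induction (P := P)
    (fun M ↦ isFinitePowTorsion_lTensor_of_free h M) (fun M _ _ n f hf hker ↦ ?_) M
  exact isFinitePowTorsion_of_shortExact (rTensor_lTensor_apply (LinearMap.ker f).subtype d)
    (rTensor_lTensor_apply f d) (hsq _) (hsq _)
    (Module.Flat.rTensor_preserves_injective_linearMap _ (Submodule.injective_subtype _))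
    (rTensor_exact _ (LinearMap.exact_subtype_ker_map f) hf) (LinearMap.rTensor_surjective _ hf)
    hker (isFinitePowTorsion_lTensor_of_free h _)

end FlatDifferentialModule

section Syzygies

open RingTheory.Sequence

variable {R M N P : Type*} [CommRing R] [AddCommGroup M] [Module R M] [AddCommGroup N] [Module R N]
  [AddCommGroup P] [Module R P] {n : ℕ}

theorem mem_span_range_smul_top_iff_exists_fun {x : Fin n → R} {m : M} :
    m ∈ Ideal.span (Set.range x) • (⊤ : Submodule R M) ↔ ∃ a : Fin n → M, ∑ i, x i • a i = m := by
  constructor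
  · intro hm
    induction hm using Submodule.smul_induction_on' with
    | smul r hr m _ =>
      obtain ⟨b, rfl⟩ := Ideal.mem_span_range_iff_exists_fun.mp hr
      exact ⟨fun i ↦ b i • m, by simp only [Finset.sum_smul, smul_smul, mul_comm]⟩
    | add m _ m' _ hm hm' =>
      obtain ⟨⟨a, rfl⟩, ⟨a', rfl⟩⟩ := And.intro hm hm'
      exact ⟨a + a', by simp only [Pi.add_apply, smul_add, Finset.sum_add_distrib]⟩
  · rintro ⟨a, rfl⟩
    exact sum_mem fun i _ ↦
      Submodule.smul_mem_smul (Ideal.subset_span (Set.mem_range_self i)) Submodule.mem_top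

theorem mem_span_range_smul_top_iff_exists_sub {x : Fin (n + 1) → R} {m : M} :
    m ∈ Ideal.span (Set.range x) • (⊤ : Submodule R M) ↔
      ∃ k, m - x (.last n) • k ∈
        Ideal.span (Set.range (x ∘ Fin.castSucc)) • (⊤ : Submodule R M) := by
  simp only [mem_span_range_smul_top_iff_exists_fun, Fin.sum_univ_castSucc]
  constructor
  · rintro ⟨a, rfl⟩
    exact ⟨a (.last n), a ∘ Fin.castSucc, (add_sub_cancel_right _ _).symm⟩
  · rintro ⟨k, a, ha⟩
    exact ⟨Fin.snoc a k, by simpa [eq_sub_iff_add_eq] using ha⟩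

theorem map_mem_smul_top (f : M →ₗ[R] N) {I : Ideal R} {m : M}
    (hm : m ∈ I • (⊤ : Submodule R M)) : f m ∈ I • (⊤ : Submodule R N) :=
  (Submodule.map_smul'' I ⊤ f).trans_le (Submodule.smul_mono le_rfl le_top)
    (Submodule.mem_map_of_mem hm)

theorem isWeaklyRegular_of_flat [Module.Flat R M] {rs : List R} (h : IsWeaklyRegular R rs) :
    IsWeaklyRegular M rs :=
  ((TensorProduct.rid R M).isWeaklyRegular_congr rs).mp h.isWeaklyRegular_lTensor

variable {x : Fin (n + 1) → R}

theorem isWeaklyRegular_ofFn_castSucc (h : IsWeaklyRegular M (List.ofFn x)) :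
    IsWeaklyRegular M (List.ofFn (x ∘ Fin.castSucc)) := by
  rw [List.ofFn_succ', List.concat_eq_append, isWeaklyRegular_append_iff] at h
  exact h.1

theorem mem_span_castSucc_smul_top_of_last_smul_mem (h : IsWeaklyRegular M (List.ofFn x)) {m : M}
    (hm : x (.last n) • m ∈ Ideal.span (Set.range (x ∘ Fin.castSucc)) • (⊤ : Submodule R M)) :
    m ∈ Ideal.span (Set.range (x ∘ Fin.castSucc)) • (⊤ : Submodule R M) := by
  rw [List.ofFn_succ', List.concat_eq_append, isWeaklyRegular_append_iff,
    isWeaklyRegular_singleton_iff] at h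
  have hspan : Ideal.ofList (List.ofFn (x ∘ Fin.castSucc)) =
      Ideal.span (Set.range (x ∘ Fin.castSucc)) :=
    congrArg Ideal.span (Set.ext fun r ↦ List.mem_ofFn' _ r)
  rw [← hspan] at hm ⊢
  exact (isSMulRegular_quotient_iff_mem_of_smul_mem _ _).mp h.2 m hm

theorem mem_span_range_smul_top_of_sum_smul_eq_zero {n : ℕ} {x : Fin n → R}
    (h : IsWeaklyRegular M (List.ofFn x)) {a : Fin n → M} (ha : ∑ i, x i • a i = 0) (i : Fin n) :
    a i ∈ Ideal.span (Set.range x) • (⊤ : Submodule R M) := by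
  induction n with
  | zero => exact i.elim0
  | succ n ih =>
    rw [Fin.sum_univ_castSucc] at ha
    have hlast := mem_span_castSucc_smul_top_of_last_smul_mem h <|
      mem_span_range_smul_top_iff_exists_fun.mpr
        ⟨-(a ∘ Fin.castSucc), by simpa [neg_eq_iff_add_eq_zero] using ha⟩
    have hle : Ideal.span (Set.range (x ∘ Fin.castSucc)) • (⊤ : Submodule R M) ≤
        Ideal.span (Set.range x) • ⊤ :=
      Submodule.smul_mono_left (Ideal.span_mono (Set.range_comp_subset_range _ _))
    obtain ⟨b, hb⟩ := mem_span_range_smul_top_iff_exists_fun.mp hlast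
    cases i using Fin.lastCases with
    | last => exact hle hlast
    | cast i =>
      have hi := ih (isWeaklyRegular_ofFn_castSucc h)
        (a := fun i ↦ a i.castSucc + x (.last n) • b i) (by
          simp only [smul_add, smul_comm _ (x (.last n)), Finset.sum_add_distrib, ← Finset.smul_sum,
            hb]
          exact ha) i
      refine (Submodule.add_mem_iff_left _ ?_).mp (hle hi)
      exact Submodule.smul_mem_smul (Ideal.subset_span (Set.mem_range_self _)) Submodule.mem_top

theorem exists_eq_sum_smul_of_projective [Module.Projective R M] {n : ℕ} {x : Fin n → R}
    {f : M →ₗ[R] N} (hf : ∀ m, f m ∈ Ideal.span (Set.range x) • (⊤ : Submodule R N)) :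
    ∃ v : Fin n → M →ₗ[R] N, f = ∑ i, x i • v i := by
  let S : (Fin n → N) →ₗ[R] N := ∑ i, x i • .proj i
  have hS (a) : S a = ∑ i, x i • a i := by simp [S]
  obtain ⟨v, hv⟩ := Module.projective_lifting_property S.rangeRestrict
    (f.codRestrict (LinearMap.range S) fun m ↦
      (mem_span_range_smul_top_iff_exists_fun.mp (hf m)).imp fun a ha ↦ (hS a).trans ha)
    S.surjective_rangeRestrict
  refine ⟨fun i ↦ .proj i ∘ₗ v, LinearMap.ext fun m ↦ ?_⟩
  have hm : S (v m) = f m := congrArg Subtype.val (LinearMap.congr_fun hv m)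
  simpa [hS] using hm.symm

theorem tmul_eq_zero_of_mem_smul_top {I : Ideal R} (hI : I ≤ Module.annihilator R P) (p : P) {m : M}
    (hm : m ∈ I • (⊤ : Submodule R M)) : p ⊗ₜ[R] m = 0 := by
  induction hm using Submodule.smul_induction_on' with
  | smul r hr m _ =>
    rw [TensorProduct.tmul_smul, TensorProduct.smul_tmul', Module.mem_annihilator.mp (hI hr),
      TensorProduct.zero_tmul]
  | add m _ m' _ hm hm' => rw [TensorProduct.tmul_add, hm, hm', add_zero]

theorem lTensor_eq_lTensor_of_forall_sub_mem {I : Ideal R} (hI : I ≤ Module.annihilator R P)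
    {f g : M →ₗ[R] N} (h : ∀ m, f m - g m ∈ I • (⊤ : Submodule R N)) :
    f.lTensor P = g.lTensor P :=
  TensorProduct.ext' fun p m ↦ by
    rw [LinearMap.lTensor_tmul, LinearMap.lTensor_tmul, ← sub_eq_zero, ← TensorProduct.tmul_sub,
      tmul_eq_zero_of_mem_smul_top hI p (h m)]

end Syzygies

section CurvedCone

open RingTheory.Sequence DifferentialHomology

variable {R F M : Type*} [CommRing R] [AddCommGroup F] [Module R F] [AddCommGroup M] [Module R M]

/-- The mapping cone, with underlying module `F × F`, of multiplication by `y` along an operator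
`d` with `d ∘ d = y • τ`: the differential is `(f, g) ↦ (d f + y g, -τ f - d g)`. -/
def curvedCone (y : R) (d τ : Module.End R F) : Module.End R (F × F) :=
  (d.coprod (y • LinearMap.id)).prod (-(τ.coprod d))

@[simp]
theorem curvedCone_apply (y : R) (d τ : Module.End R F) (z : F × F) :
    curvedCone y d τ z = (d z.1 + y • z.2, -(τ z.1 + d z.2)) :=
  rfl

/-- The lower triangular operator `(f, g) ↦ (t f, v f + t g)` on `F × F`. -/
def lowerTriangular (t v : Module.End R F) : Module.End R (F × F) :=
  (t.coprod 0).prod (v.coprod t)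

@[simp]
theorem lowerTriangular_apply (t v : Module.End R F) (z : F × F) :
    lowerTriangular t v z = (t z.1, v z.1 + t z.2) := by
  simp [lowerTriangular]

variable {n : ℕ} {d : Module.End R F}

theorem curvedCone_mul_self {x : Fin (n + 1) → R} {t : Fin (n + 1) → Module.End R F}
    (hd : d * d = ∑ i, x i • t i) {v : Fin n → Module.End R F}
    (hv : d * t (.last n) - t (.last n) * d = ∑ i, x i.castSucc • v i) :
    curvedCone (x (.last n)) d (t (.last n)) * curvedCone (x (.last n)) d (t (.last n)) =
      ∑ i : Fin n, x i.castSucc • lowerTriangular (t i.castSucc) (v i) := by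
  have hd' (f) : d (d f) = ∑ i : Fin n, x i.castSucc • t i.castSucc f +
      x (.last n) • t (.last n) f := by
    simpa [Fin.sum_univ_castSucc] using LinearMap.congr_fun hd f
  have hv' (f) : d (t (.last n) f) - t (.last n) (d f) = ∑ i, x i.castSucc • v i f := by
    simpa using LinearMap.congr_fun hv f
  refine LinearMap.ext fun z ↦ Prod.ext ?_ ?_
  · simp [Prod.fst_sum, hd']
  · simp only [Module.End.mul_apply, curvedCone_apply, map_add, map_neg, map_smul, hd', neg_add,
      neg_neg, LinearMap.sum_apply, LinearMap.smul_apply, lowerTriangular_apply, Prod.snd_sum,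
      Prod.smul_snd, smul_add, Finset.sum_add_distrib, ← hv']
    abel

theorem comp_sub_comp_mem {x : Fin n → R} (hx : IsWeaklyRegular F (List.ofFn x))
    {t : Fin n → Module.End R F} (hd : d * d = ∑ i, x i • t i) (i : Fin n) (f : F) :
    t i (d f) - d (t i f) ∈ Ideal.span (Set.range x) • (⊤ : Submodule R F) := by
  refine mem_span_range_smul_top_of_sum_smul_eq_zero hx
    (a := fun i ↦ t i (d f) - d (t i f)) ?_ i
  have hd' (f) : d (d f) = ∑ i, x i • t i f := by simpa using LinearMap.congr_fun hd f
  have hassoc := (hd' (d f)).symm.trans (congrArg d (hd' f))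
  simpa only [smul_sub, Finset.sum_sub_distrib, map_sum, map_smul, sub_eq_zero] using hassoc

theorem lTensor_apply_comm {x : Fin n → R} (hx : IsWeaklyRegular F (List.ofFn x))
    {t : Fin n → Module.End R F} (hd : d * d = ∑ i, x i • t i)
    (hM : Ideal.span (Set.range x) ≤ Module.annihilator R M) (i : Fin n)
    (z : TensorProduct R M F) :
    (t i).lTensor M (d.lTensor M z) = d.lTensor M ((t i).lTensor M z) := by
  rw [← LinearMap.lTensor_comp_apply, ← LinearMap.lTensor_comp_apply,
    lTensor_eq_lTensor_of_forall_sub_mem hM (g := d ∘ₗ t i) (comp_sub_comp_mem hx hd i)]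

theorem lTensor_apply_self {x : Fin n → R} {t : Fin n → Module.End R F}
    (hd : d * d = ∑ i, x i • t i) (hM : Ideal.span (Set.range x) ≤ Module.annihilator R M)
    (z : TensorProduct R M F) : d.lTensor M (d.lTensor M z) = 0 := by
  rw [← LinearMap.lTensor_comp_apply, lTensor_eq_lTensor_of_forall_sub_mem hM (g := 0),
    LinearMap.lTensor_zero, LinearMap.zero_apply]
  intro f
  exact mem_span_range_smul_top_iff_exists_fun.mpr
    ⟨fun i ↦ t i f, by simpa using (LinearMap.congr_fun hd f).symm⟩

theorem exists_comm_eq_sum_smul [Module.Projective R F] {x : Fin (n + 1) → R}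
    (hx : IsWeaklyRegular F (List.ofFn x)) {t : Fin (n + 1) → Module.End R F}
    (hd : d * d = ∑ i, x i • t i) :
    ∃ v : Fin n → Module.End R F,
      d * t (.last n) - t (.last n) * d = ∑ i, x i.castSucc • v i := by
  have hd' (f) : d (d f) = ∑ i : Fin n, x i.castSucc • t i.castSucc f +
      x (.last n) • t (.last n) f := by
    simpa [Fin.sum_univ_castSucc] using LinearMap.congr_fun hd f
  refine exists_eq_sum_smul_of_projective (x := x ∘ Fin.castSucc) fun f ↦
    mem_span_castSucc_smul_top_of_last_smul_mem hx ?_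
  refine mem_span_range_smul_top_iff_exists_fun.mpr
    ⟨fun i ↦ t i.castSucc (d f) - d (t i.castSucc f), ?_⟩
  have hassoc := (hd' (d f)).symm.trans (congrArg d (hd' f))
  simp only [map_add, map_sum, map_smul] at hassoc
  simp only [Function.comp_apply, smul_sub, Finset.sum_sub_distrib, LinearMap.sub_apply,
    Module.End.mul_apply]
  rw [sub_eq_sub_iff_add_eq_add, hassoc, add_comm]

/-- Reducing `F × F` modulo `x₀, …, xₙ₋₁` and `F` modulo `x₀, …, xₙ`, the first projection of the
curved cone. -/
def curvedConeToQuotient (x : Fin (n + 1) → R) :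
    TensorProduct R (R ⧸ Ideal.span (Set.range (x ∘ Fin.castSucc))) (F × F) →ₗ[R]
      TensorProduct R (R ⧸ Ideal.span (Set.range x)) F :=
  TensorProduct.map (Submodule.factor (Ideal.span_mono (Set.range_comp_subset_range _ _)))
    (.fst R F F)

theorem one_tmul_eq_zero_iff {I : Ideal R} {f : F} :
    (1 : R ⧸ I) ⊗ₜ[R] f = 0 ↔ f ∈ I • (⊤ : Submodule R F) :=
  Submodule.ext_iff.mp (LinearMap.ker_tensorProductMk ..) f

theorem exists_one_tmul_eq {I : Ideal R} (z : TensorProduct R (R ⧸ I) F) :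
    ∃ f, (1 : R ⧸ I) ⊗ₜ[R] f = z :=
  TensorProduct.mk_surjective R F (R ⧸ I) Ideal.Quotient.mk_surjective z

theorem curvedConeToQuotient_lTensor_apply (x : Fin (n + 1) → R) (d τ : Module.End R F) (z) :
    curvedConeToQuotient x ((curvedCone (x (.last n)) d τ).lTensor _ z) =
      d.lTensor _ (curvedConeToQuotient x z) := by
  obtain ⟨⟨f, g⟩, rfl⟩ := exists_one_tmul_eq z
  have hxg : (1 : R ⧸ Ideal.span (Set.range x)) ⊗ₜ[R] (x (.last n) • g) = 0 :=
    one_tmul_eq_zero_iff.mpr <|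
      Submodule.smul_mem_smul (Ideal.subset_span (Set.mem_range_self _)) Submodule.mem_top
  change 1 ⊗ₜ (d f + x (.last n) • g) = 1 ⊗ₜ d f
  rw [TensorProduct.tmul_add, hxg, add_zero]

theorem bijective_map_curvedConeToQuotient {x : Fin (n + 1) → R}
    (hx : IsWeaklyRegular F (List.ofFn x)) {t : Fin (n + 1) → Module.End R F}
    (hd : d * d = ∑ i, x i • t i) {v : Fin n → Module.End R F}
    (hv : d * t (.last n) - t (.last n) * d = ∑ i, x i.castSucc • v i) :
    Function.Bijective (DifferentialHomology.map (curvedConeToQuotient x)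
      (curvedConeToQuotient_lTensor_apply x d (t (.last n)))) := by
  refine map_bijective_of_acyclic_ker _
    (lTensor_apply_self (x := x ∘ Fin.castSucc) (curvedCone_mul_self hd hv)
      Ideal.annihilator_quotient.ge) (fun w ↦ ?_) fun z hpz hz ↦ ?_
  · obtain ⟨f, rfl⟩ := exists_one_tmul_eq w
    exact ⟨1 ⊗ₜ (f, 0), rfl⟩
  obtain ⟨⟨f, g⟩, rfl⟩ := exists_one_tmul_eq z
  have hf : f ∈ Ideal.span (Set.range x) • (⊤ : Submodule R F) := one_tmul_eq_zero_iff.mp hpz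
  obtain ⟨k, hk⟩ := mem_span_range_smul_top_iff_exists_sub.mp hf
  have hdfg : d f + x (.last n) • g ∈
      Ideal.span (Set.range (x ∘ Fin.castSucc)) • (⊤ : Submodule R F) :=
    map_mem_smul_top (.fst R F F) (one_tmul_eq_zero_iff.mp hz)
  have hg : g + d k ∈ Ideal.span (Set.range (x ∘ Fin.castSucc)) • (⊤ : Submodule R F) := by
    refine mem_span_castSucc_smul_top_of_last_smul_mem hx ?_
    have hsub := sub_mem hdfg (map_mem_smul_top d hk)
    rwa [map_sub, map_smul, ← sub_add, add_sub_cancel_left, ← smul_add] at hsub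
  refine ⟨1 ⊗ₜ (0, k), TensorProduct.tmul_zero _ _, (sub_eq_zero.mp ?_).symm⟩
  rw [LinearMap.lTensor_tmul, ← TensorProduct.tmul_sub, one_tmul_eq_zero_iff]
  simpa using add_mem (map_mem_smul_top (.inl R F F) hk) (map_mem_smul_top (.inr R F F) hg)

end CurvedCone

section ConeHomology

open RingTheory.Sequence DifferentialHomology IsLocalRing

theorem isArtinian_of_maximalIdeal_pow_le_annihilator {R H : Type*} [CommRing R]
    [IsNoetherianRing R] [IsLocalRing R] [AddCommGroup H] [Module R H] [Module.Finite R H] {k : ℕ}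
    (hk : maximalIdeal R ^ k ≤ Module.annihilator R H) : IsArtinian R H := by
  rcases subsingleton_or_nontrivial H with _ | _
  · infer_instance
  let I := Module.annihilator R H
  have : Nontrivial (R ⧸ I) := Ideal.Quotient.nontrivial_iff.mpr fun h ↦
    not_subsingleton H (Module.annihilator_eq_top_iff.mp h)
  have := IsLocalRing.of_surjective' (Ideal.Quotient.mk I) Ideal.Quotient.mk_surjective
  have : IsArtinianRing (R ⧸ I) := by
    rw [isArtinianRing_iff_isNilpotent_maximalIdeal,
      ← map_maximalIdeal_of_surjective (Ideal.Quotient.mk I) Ideal.Quotient.mk_surjective]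
    exact ⟨k, by rwa [← Ideal.map_pow, Ideal.zero_eq_bot, Ideal.map_eq_bot_iff_le_ker,
      Ideal.mk_ker]⟩
  let _ := Module.quotientAnnihilator (R := R) (M := H)
  have : IsScalarTower R (R ⧸ I) H := (Module.isTorsionBySet_annihilator R H).isScalarTower
  have : Module.Finite (R ⧸ I) H := .of_restrictScalars_finite R _ _
  exact isArtinian_of_surjective_algebraMap (S := R) (R := R ⧸ I) Ideal.Quotient.mk_surjective

section Cone

variable {R X E : Type*} [CommRing R] [AddCommGroup X] [Module R X] [AddCommGroup E] [Module R E]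
  {d τ t v : Module.End R X} {D T : Module.End R E} {e : E ≃ₗ[R] X × X}

theorem range_map_fst_eq_ker_map (he : ∀ z, e (D z) = curvedCone 0 d τ (e z))
    (hτ : ∀ x, τ (d x) = d (τ x)) :
    LinearMap.range (map (d := D) (.fst R X X ∘ₗ e.toLinearMap) (fun z ↦ by simp [he])) =
      LinearMap.ker (map τ hτ) := by
  ext h
  obtain ⟨x, hx, rfl⟩ := exists_cls_eq h
  rw [LinearMap.mem_ker, map_cls, cls_eq_zero_iff]
  constructor
  · rintro ⟨h, hh⟩
    obtain ⟨z, hz, rfl⟩ := exists_cls_eq h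
    obtain ⟨b, hb⟩ := cls_eq_cls_iff.mp hh
    have hcone : curvedCone 0 d τ (e z) = 0 := by rw [← he, hz, map_zero]
    have hz₂ : τ (e z).1 + d (e z).2 = 0 := neg_eq_zero.mp (congrArg Prod.snd hcone)
    have hb : d b = (e z).1 - x := hb
    refine ⟨-(τ b + (e z).2), ?_⟩
    rw [map_neg, map_add, ← hτ, hb, map_sub, neg_eq_iff_add_eq_zero, sub_add_eq_add_sub, hz₂]
    abel
  · rintro ⟨b, hb⟩
    refine ⟨cls (e.symm (x, -b)) (e.injective ?_), ?_⟩
    · simp [he, hx, hb]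
    · exact (map_cls ..).trans (cls_eq_cls_iff.mpr ⟨0, by simp⟩)

theorem exists_pow_mem_range_of_lowerTriangular (he : ∀ z, e (D z) = curvedCone 0 d τ (e z))
    (heT : ∀ z, e (T z) = lowerTriangular t v (e z)) (hDD : ∀ z, D (D z) = 0)
    (hTD : Commute T D) (ht : ∀ x, d x = 0 → ∃ k, (t ^ k) x ∈ LinearMap.range d) (z : E)
    (hz : D z = 0) :
    ∃ k, (T ^ k) z ∈ LinearMap.range D := by
  have hfst (k z) : (e ((T ^ k) z)).1 = (t ^ k) (e z).1 :=
    LinearMap.congr_fun (Module.End.commute_pow_left_of_commute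
      (g := T) (g₂ := t) (f := .fst R X X ∘ₗ e.toLinearMap) (by ext z; simp [heT]) k).symm z
  have hinr (k y) : (T ^ k) (e.symm (0, y)) = e.symm (0, (t ^ k) y) :=
    LinearMap.congr_fun (Module.End.commute_pow_left_of_commute
      (g := t) (g₂ := T) (f := e.symm.toLinearMap ∘ₗ .inr R X X)
      (by ext y; exact e.injective (by simp [heT])) k) y
  have hcone : curvedCone 0 d τ (e z) = 0 := by rw [← he, hz, map_zero]
  obtain ⟨k, b, hb⟩ := ht (e z).1 (by simpa using congrArg Prod.fst hcone)
  obtain ⟨y, hy⟩ : ∃ y, (T ^ k) z - D (e.symm (b, 0)) = e.symm (0, y) :=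
    ⟨(e ((T ^ k) z - D (e.symm (b, 0)))).2,
      e.injective (Prod.ext (by simp [he, hfst, hb]) (by simp))⟩
  have hTDz (k z) : (T ^ k) (D z) = D ((T ^ k) z) := LinearMap.congr_fun (hTD.pow_left k).eq z
  have hdy : d y = 0 := by
    have hDy : D (e.symm (0, y)) = 0 := by
      rw [← hy, map_sub, hDD, ← hTDz, hz, map_zero, sub_zero]
    simpa [he] using congrArg (fun z ↦ (e z).2) hDy
  obtain ⟨m, b', hb'⟩ := ht y hdy
  refine ⟨m + k, (T ^ m) (e.symm (b, 0)) + e.symm (0, -b'), ?_⟩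
  have hDb' : D (e.symm (0, -b')) = e.symm (0, (t ^ m) y) := e.injective (by simp [he, hb'])
  rw [map_add, hDb', ← hinr, ← hy, map_sub, hTDz, add_sub_cancel, pow_add, Module.End.mul_apply]

theorem exists_map_pow_apply_eq_zero (htd : ∀ x, t (d x) = d (t x))
    (ht : ∀ x, d x = 0 → ∃ k, (t ^ k) x ∈ LinearMap.range d) (h : DifferentialHomology d) :
    ∃ k, (map t htd ^ k) h = 0 := by
  have hcls (k x) (hx : d x = 0) (hkx : (t ^ k) x ∈ LinearMap.range d) :
      (map t htd ^ k) (cls x hx) = 0 := by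
    induction k generalizing x with
    | zero => exact cls_eq_zero_iff.mpr hkx
    | succ k ih =>
      rw [pow_succ, Module.End.mul_apply] at hkx ⊢
      exact ih (t x) _ hkx
  obtain ⟨x, hx, rfl⟩ := exists_cls_eq h
  exact (ht x hx).imp fun k ↦ hcls k x hx

end Cone

section Tensor

variable {R F M : Type*} [CommRing R] [AddCommGroup F] [Module R F] [AddCommGroup M] [Module R M]

theorem prodRight_lTensor_curvedCone {y : R} (hy : y ∈ Module.annihilator R M)
    (d τ : Module.End R F) (z : TensorProduct R M (F × F)) :
    TensorProduct.prodRight R R M F F ((curvedCone y d τ).lTensor M z) =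
      curvedCone 0 (d.lTensor M) (τ.lTensor M) (TensorProduct.prodRight R R M F F z) := by
  induction z with
  | zero => simp only [map_zero]
  | add z w hz hw => simp only [map_add, hz, hw]
  | tmul m f =>
    have hym : m ⊗ₜ[R] (y • f.2) = 0 := by
      rw [← TensorProduct.smul_tmul, Module.mem_annihilator.mp hy, TensorProduct.zero_tmul]
    simp [TensorProduct.tmul_add, TensorProduct.tmul_neg, hym]

theorem prodRight_lTensor_lowerTriangular (t v : Module.End R F) (z : TensorProduct R M (F × F)) :
    TensorProduct.prodRight R R M F F ((lowerTriangular t v).lTensor M z) =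
      lowerTriangular (t.lTensor M) (v.lTensor M) (TensorProduct.prodRight R R M F F z) := by
  induction z with
  | zero => simp only [map_zero]
  | add z w hz hw => simp only [map_add, hz, hw]
  | tmul m f => simp [TensorProduct.tmul_add]

variable {n : ℕ} {d : Module.End R F}

theorem commute_map_lTensor [Module.Projective R F] {x : Fin (n + 1) → R}
    (hx : IsWeaklyRegular R (List.ofFn x)) {t : Fin (n + 1) → Module.End R F}
    (hd : d * d = ∑ i, x i • t i) (hM : Ideal.span (Set.range x) ≤ Module.annihilator R M)
    (i : Fin n) :
    Commute (map ((t i.castSucc).lTensor M)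
        (lTensor_apply_comm (isWeaklyRegular_of_flat hx) hd hM i.castSucc))
      (map ((t (.last n)).lTensor M)
        (lTensor_apply_comm (isWeaklyRegular_of_flat hx) hd hM (.last n))) := by
  obtain ⟨v, hv⟩ := exists_comm_eq_sum_smul (isWeaklyRegular_of_flat hx) hd
  have hxM : x (.last n) ∈ Module.annihilator R M := hM (Ideal.subset_span (Set.mem_range_self _))
  have hhomotopy (w : TensorProduct R M F) :
      (t i.castSucc).lTensor M ((t (.last n)).lTensor M w) -
        (t (.last n)).lTensor M ((t i.castSucc).lTensor M w) =
      d.lTensor M ((v i).lTensor M w) + (v i).lTensor M (d.lTensor M w) := by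
    have hcomm := congrArg (fun z ↦ (TensorProduct.prodRight R R M F F z).2) <|
      lTensor_apply_comm (M := M) (isWeaklyRegular_of_flat (isWeaklyRegular_ofFn_castSucc hx))
        (curvedCone_mul_self hd hv) ((Ideal.span_mono (Set.range_comp_subset_range _ _)).trans hM) i
        ((TensorProduct.prodRight R R M F F).symm (w, 0))
    simp only [prodRight_lTensor_curvedCone hxM, prodRight_lTensor_lowerTriangular,
      LinearEquiv.apply_symm_apply, curvedCone_apply, lowerTriangular_apply, smul_zero, map_zero,
      add_zero, map_neg] at hcomm
    rw [← sub_eq_zero] at hcomm ⊢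
    rw [← neg_eq_zero, ← hcomm]
    abel
  have hl i := lTensor_apply_comm (M := M) (isWeaklyRegular_of_flat hx) hd hM i
  have hmap : map ((t i.castSucc).lTensor M ∘ₗ (t (.last n)).lTensor M)
      (fun z ↦ (congrArg _ (hl _ z)).trans (hl _ _)) =
      map ((t (.last n)).lTensor M ∘ₗ (t i.castSucc).lTensor M)
      (fun z ↦ (congrArg _ (hl _ z)).trans (hl _ _)) :=
    map_eq_map_of_homotopy ((v i).lTensor M) hhomotopy
  refine LinearMap.ext fun h ↦ ?_
  obtain ⟨w, hw, rfl⟩ := exists_cls_eq h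
  exact LinearMap.congr_fun hmap (cls w hw)

end Tensor

end ConeHomology

section ChainCondition

open RingTheory.Sequence DifferentialHomology IsLocalRing

theorem annihilator_le_annihilator_tensorProduct (R M F : Type*) [CommRing R] [AddCommGroup F]
    [Module R F] [AddCommGroup M] [Module R M] :
    Module.annihilator R M ≤ Module.annihilator R (TensorProduct R M F) := by
  intro r hr
  refine Module.mem_annihilator.mpr fun z ↦ ?_
  have hr0 : r • (LinearMap.id : M →ₗ[R] M) = 0 := LinearMap.ext (Module.mem_annihilator.mp hr)
  simpa [LinearMap.rTensor_smul] using LinearMap.congr_fun (congrArg (LinearMap.rTensor F) hr0) z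

theorem annihilator_le_annihilator_lTensor {R F M : Type*} [CommRing R] [AddCommGroup F]
    [Module R F] [AddCommGroup M] [Module R M] (d : Module.End R F) :
    Module.annihilator R M ≤ Module.annihilator R (DifferentialHomology (d.lTensor M)) :=
  (annihilator_le_annihilator_tensorProduct ..).trans <|
    (LinearMap.annihilator_le_of_injective _ (Submodule.subtype_injective _)).trans
      (LinearMap.annihilator_le_of_surjective _ (Submodule.mkQ_surjective _))

theorem bijective_map_one_tmul {R F : Type*} [CommRing R] [AddCommGroup F] [Module R F]
    {I : Ideal R} (hI : I = ⊥) (d : Module.End R F) (hd : ∀ f, d (d f) = 0) :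
    Function.Bijective (map (d := d) (dY := d.lTensor (R ⧸ I)) (TensorProduct.mk R (R ⧸ I) F 1)
      fun _ ↦ rfl) := by
  refine map_bijective_of_acyclic_ker _ hd exists_one_tmul_eq fun f hf _ ↦ ⟨0, by simp, ?_⟩
  have hf := one_tmul_eq_zero_iff.mp hf
  rw [hI, Submodule.bot_smul, Submodule.mem_bot] at hf
  rw [hf, map_zero]

universe u

variable {R : Type u} [CommRing R] [IsRegularLocalRing R] {M : Type u} [AddCommGroup M] [Module R M]
  [Module.Finite R M] {J : Ideal R} {k : ℕ}

theorem isArtinian_differentialHomology_lTensor {F : Type*} [AddCommGroup F] [Module R F]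
    [Module.Flat R F] {d : Module.End R F} (hd : d ∘ₗ d = 0)
    (hH : IsFinitePowTorsion J (DifferentialHomology d))
    (hk : maximalIdeal R ^ k ≤ Module.annihilator R M ⊔ J) :
    IsArtinian R (DifferentialHomology (d.lTensor M)) := by
  obtain ⟨_, l, hl⟩ := isFinitePowTorsion_lTensor hd hH M
  refine isArtinian_of_maximalIdeal_pow_le_annihilator (k := k * (1 + l)) ?_
  calc maximalIdeal R ^ (k * (1 + l)) ≤ (Module.annihilator R M ⊔ J) ^ (1 + l) := by
        rw [pow_mul]; exact Ideal.pow_right_mono hk _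
    _ ≤ Module.annihilator R M ^ 1 ⊔ J ^ l := Ideal.sup_pow_add_le_pow_sup_pow
    _ ≤ _ := by rw [pow_one]; exact sup_le (annihilator_le_annihilator_lTensor d) hl

theorem stableDCC_lTensor {F : Type*} [AddCommGroup F] [Module R F]
    [Module.Projective R F] {n : ℕ} {d : Module.End R F} {x : Fin n → R}
    (hx : IsWeaklyRegular R (List.ofFn x)) {t : Fin n → Module.End R F}
    (hd : d * d = ∑ i, x i • t i) (hM : Ideal.span (Set.range x) ≤ Module.annihilator R M)
    (hH : IsFinitePowTorsion J
      (DifferentialHomology (d.lTensor (R ⧸ Ideal.span (Set.range x)))))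
    (hk : maximalIdeal R ^ k ≤ Module.annihilator R M ⊔ J)
    (hnil : ∀ i z, d.lTensor M z = 0 →
      ∃ m, ((t i).lTensor M ^ m) z ∈ LinearMap.range (d.lTensor M)) :
    StableDCC fun i ↦ map ((t i).lTensor M)
      (lTensor_apply_comm (isWeaklyRegular_of_flat hx) hd hM i) := by
  induction n generalizing F with
  | zero =>
    have hd0 : d ∘ₗ d = 0 := by rw [← Module.End.mul_eq_comp, hd, Fin.sum_univ_zero]
    have hI : Ideal.span (Set.range x) = ⊥ := by simp
    have := isArtinian_differentialHomology_lTensor hd0 (hH.congr (LinearEquiv.ofBijective _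
      (bijective_map_one_tmul hI d (LinearMap.congr_fun hd0))).symm) hk
    exact stableDCC_of_isArtinian _
  | succ n ih =>
    have hxF := isWeaklyRegular_of_flat (M := F) hx
    obtain ⟨v, hv⟩ := exists_comm_eq_sum_smul hxF hd
    have hM' : Ideal.span (Set.range (x ∘ Fin.castSucc)) ≤ Module.annihilator R M :=
      (Ideal.span_mono (Set.range_comp_subset_range _ _)).trans hM
    have hcone := curvedCone_mul_self hd hv
    have hxM : x (.last n) ∈ Module.annihilator R M :=
      hM (Ideal.subset_span (Set.mem_range_self _))
    have hsq := lTensor_apply_self hcone hM'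
    have hcomm := lTensor_apply_comm
      (isWeaklyRegular_of_flat (isWeaklyRegular_ofFn_castSucc hx)) hcone hM'
    have hDCC := ih (isWeaklyRegular_ofFn_castSucc hx) hcone hM'
      (hH.congr (LinearEquiv.ofBijective _ (bijective_map_curvedConeToQuotient hxF hd hv)).symm)
      fun i ↦ exists_pow_mem_range_of_lowerTriangular (prodRight_lTensor_curvedCone hxM d _)
        (prodRight_lTensor_lowerTriangular _ _) hsq (LinearMap.ext (hcomm i)) (hnil i.castSucc)
    refine hDCC.of_range_eq_ker Fin.castSucc (.last n) (fun i h ↦ ?_)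
      (range_map_fst_eq_ker_map (prodRight_lTensor_curvedCone hxM d _)
        (lTensor_apply_comm hxF hd hM (.last n)))
      (commute_map_lTensor hx hd hM) (exists_map_pow_apply_eq_zero _ (hnil (.last n)))
    obtain ⟨z, hz, rfl⟩ := exists_cls_eq h
    refine (map_cls ..).trans (cls_eq_cls_iff.mpr ⟨0, ?_⟩)
    simp [prodRight_lTensor_lowerTriangular]

end ChainCondition

section Totalization

open DifferentialHomology DirectSum

variable {R : Type*} [CommRing R] {X : ℕ → Type*} [∀ n, AddCommGroup (X n)] [∀ n, Module R (X n)]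

/-- The endomorphism of the direct sum `⨁ n, X n` with components `f n : X (n + k) → X n`. For
`k = 1` this is the total differential of a complex. -/
noncomputable def shiftMap (k : ℕ) (f : ∀ n, X (n + k) →ₗ[R] X n) : Module.End R (⨁ n, X n) :=
  lmap f ∘ₗ
    { toFun := DFinsupp.comapDomain (· + k) (add_left_injective k)
      map_add' := DFinsupp.comapDomain_add (· + k) (add_left_injective k)
      map_smul' := DFinsupp.comapDomain_smul (· + k) (add_left_injective k) }

variable {k : ℕ} (f : ∀ n, X (n + k) →ₗ[R] X n)

@[simp]
theorem shiftMap_apply (z : ⨁ n, X n) (n : ℕ) : shiftMap k f z n = f n (z (n + k)) :=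
  rfl

theorem shiftMap_of (n : ℕ) (a : X (n + k)) : shiftMap k f (of X (n + k) a) = of X n (f n a) := by
  refine DFinsupp.ext fun m ↦ ?_
  rw [shiftMap_apply]
  rcases eq_or_ne n m with rfl | h
  · rw [of_eq_same, of_eq_same]
  · rw [of_eq_of_ne _ _ _ (by omega), of_eq_of_ne _ _ _ h.symm, map_zero]

theorem mem_range_shiftMap_iff {z : ⨁ n, X n} :
    z ∈ LinearMap.range (shiftMap k f) ↔ ∀ n, z n ∈ LinearMap.range (f n) := by
  classical
  constructor
  · rintro ⟨w, rfl⟩ n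
    exact ⟨w (n + k), rfl⟩
  · intro h
    rw [← sum_support_of z]
    refine sum_mem fun n _ ↦ ?_
    obtain ⟨a, ha⟩ := h n
    exact ⟨of X (n + k) a, by rw [shiftMap_of, ha]⟩

theorem exists_pow_shiftMap_apply_eq_zero (hk : k ≠ 0) (z : ⨁ n, X n) :
    ∃ m, (shiftMap k f ^ m) z = 0 := by
  classical
  have hpow (m : ℕ) (z : ⨁ n, X n) (hz : ∀ n ≥ m, z n = 0) : (shiftMap k f ^ m) z = 0 := by
    induction m generalizing z with
    | zero => exact DFinsupp.ext fun n ↦ hz n n.zero_le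
    | succ m ih =>
      rw [pow_succ, Module.End.mul_apply]
      exact ih _ fun n hn ↦ by rw [shiftMap_apply, hz _ (by omega), map_zero]
  obtain ⟨m, hm⟩ := z.support.exists_nat_subset_range
  exact ⟨m, hpow m z fun n hn ↦ DFinsupp.notMem_support_iff.mp fun h ↦
    (Finset.mem_range.mp (hm h)).not_ge hn⟩

theorem exists_pow_lTensor_apply_eq_zero {F M : Type*} [AddCommGroup F] [Module R F]
    [AddCommGroup M] [Module R M] {t : Module.End R F} (ht : ∀ f, ∃ m, (t ^ m) f = 0)
    (z : TensorProduct R M F) : ∃ m, (t.lTensor M ^ m) z = 0 := by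
  induction z with
  | zero => exact ⟨0, map_zero _⟩
  | tmul a f =>
    obtain ⟨m, hm⟩ := ht f
    exact ⟨m, by rw [LinearMap.lTensor_pow, LinearMap.lTensor_tmul, hm, TensorProduct.tmul_zero]⟩
  | add z w hz hw =>
    obtain ⟨m, hm⟩ := hz
    obtain ⟨l, hl⟩ := hw
    exact ⟨m + l, by rw [map_add, Module.End.pow_map_zero_of_le (Nat.le_add_right m l) hm,
      Module.End.pow_map_zero_of_le (Nat.le_add_left l m) hl, add_zero]⟩

theorem directSumRight_lTensor_shiftMap (M : Type*) [AddCommGroup M] [Module R M]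
    (z : TensorProduct R M (⨁ n, X n)) :
    TensorProduct.directSumRight R R M X ((shiftMap k f).lTensor M z) =
      shiftMap k (fun n ↦ (f n).lTensor M) (TensorProduct.directSumRight R R M X z) := by
  induction z with
  | zero => simp only [map_zero]
  | tmul a z => exact DFinsupp.ext fun n ↦ by simp
  | add z w hz hw => simp only [map_add, hz, hw]

variable {J : Ideal R} {δ : ∀ n, X (n + 1) →ₗ[R] X n}

theorem isFinitePowTorsion_of_resolution [IsNoetherianRing R] {N : Type*} [AddCommGroup N]
    [Module R N] (hN : IsFinitePowTorsion J N) {ε : X 0 →ₗ[R] N} (hε : Function.Exact (δ 0) ε)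
    (hδ : ∀ n, Function.Exact (δ (n + 1)) (δ n)) :
    IsFinitePowTorsion J (DifferentialHomology (shiftMap 1 δ)) := by
  let g : DifferentialHomology (shiftMap 1 δ) →ₗ[R] N :=
    Submodule.liftQ _ (ε ∘ₗ component R ℕ X 0 ∘ₗ Submodule.subtype _) <| by
      rintro ⟨_, _⟩ ⟨b, rfl⟩
      exact hε.apply_apply_eq_zero (b 1)
  refine hN.of_injective (f := g) ((injective_iff_map_eq_zero g).mpr fun h hh ↦ ?_)
  obtain ⟨z, hz, rfl⟩ := exists_cls_eq h
  refine cls_eq_zero_iff.mpr ((mem_range_shiftMap_iff δ).mpr fun n ↦ ?_)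
  cases n with
  | zero => exact (hε _).mp hh
  | succ n => exact (hδ n _).mp (DFinsupp.ext_iff.mp hz n)

/-- The homology classes of the total differential of `δ` that are represented by a cycle with no
components in degrees below `k`. -/
noncomputable def tailHomology (δ : ∀ n, X (n + 1) →ₗ[R] X n) (k : ℕ) :
    Submodule R (DifferentialHomology (shiftMap 1 δ)) :=
  ((⨅ j < k, LinearMap.ker (component R ℕ X j)).submoduleOf _).map (Submodule.mkQ _)

theorem mem_tailHomology_iff {h : DifferentialHomology (shiftMap 1 δ)} :
    h ∈ tailHomology δ k ↔ ∃ z, ∃ hz : shiftMap 1 δ z = 0, (∀ j < k, z j = 0) ∧ cls z hz = h := by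
  have hmem (z : ⨁ n, X n) :
      z ∈ (⨅ j < k, LinearMap.ker (component R ℕ X j)) ↔ ∀ j < k, z j = 0 := by
    simp only [Submodule.mem_iInf, LinearMap.mem_ker, apply_eq_component R]
  exact ⟨fun ⟨⟨z, hz⟩, hzk, hzh⟩ ↦ ⟨z, hz, (hmem z).mp hzk, hzh⟩,
    fun ⟨z, hz, hzk, hzh⟩ ↦ ⟨⟨z, hz⟩, (hmem z).mpr hzk, hzh⟩⟩

theorem tailHomology_antitone : Antitone (tailHomology δ) := fun _ _ hkl ↦
  Submodule.map_mono <| Submodule.comap_mono <| biInf_mono fun _ hj ↦ hj.trans_le hkl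

theorem exists_forall_ge_exact_add_two {ι : Type*} {s : ι → ∀ n, X (n + 2) →ₗ[R] X n}
    (hδ : ∀ n z, δ n (δ (n + 1) z) = 0)
    {hcomm : ∀ i z, shiftMap 2 (s i) (shiftMap 1 δ z) = shiftMap 1 δ (shiftMap 2 (s i) z)}
    (hDCC : StableDCC fun i ↦ map (shiftMap 2 (s i)) (hcomm i)) :
    ∃ K, ∀ n ≥ K, Function.Exact (δ (n + 1)) (δ n) →
      Function.Exact (δ (n + 3)) (δ (n + 2)) := by
  let U (k : ℕ) := (⨅ i, LinearMap.ker (map (shiftMap 2 (s i)) (hcomm i))) ⊓ tailHomology δ k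
  obtain ⟨K, hK⟩ := hDCC U (fun k l hkl ↦ inf_le_inf_left _ (tailHomology_antitone hkl))
    fun k i h hh ↦ by
      have h0 := LinearMap.mem_ker.mp ((Submodule.mem_iInf _).mp hh.1 i)
      exact (congrArg (· ∈ U k) h0).mpr (zero_mem _)
  refine ⟨K, fun n hn hexact z ↦ ⟨fun hz ↦ ?_, fun ⟨w, hw⟩ ↦ hw ▸ hδ _ w⟩⟩
  have hcycle : shiftMap 1 δ (of X (n + 3) z) = 0 :=
    (shiftMap_of δ (n + 2) z).trans (by rw [hz, map_zero])
  have hsocle : cls (of X (n + 3) z) hcycle ∈ U (n + 3) := by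
    refine ⟨(Submodule.mem_iInf _).mpr fun i ↦ ?_, mem_tailHomology_iff.mpr
      ⟨_, hcycle, fun j hj ↦ of_eq_of_ne _ _ _ hj.ne, rfl⟩⟩
    refine (map_cls ..).trans (cls_eq_zero_iff.mpr ?_)
    have hsz : δ n (s i (n + 1) z) = 0 := calc
      _ = shiftMap 1 δ (shiftMap 2 (s i) (of X (n + 3) z)) n := by
        rw [shiftMap_apply, shiftMap_apply]
        exact congrArg (fun a ↦ δ n (s i (n + 1) a)) (of_eq_same (n + 3) z).symm
      _ = 0 := by rw [← hcomm, hcycle, map_zero, DirectSum.zero_apply]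
    obtain ⟨w, hw⟩ := (hexact _).mp hsz
    exact ⟨of X (n + 2) w, (shiftMap_of δ (n + 1) w).trans
      ((congrArg _ hw).trans (shiftMap_of (s i) (n + 1) z).symm)⟩
  rw [hK (n + 3) (by omega), ← hK (n + 4) (by omega)] at hsocle
  obtain ⟨w, hw, hw0, hwz⟩ := mem_tailHomology_iff.mp hsocle.2
  obtain ⟨b, hb⟩ := cls_eq_cls_iff.mp hwz
  refine ⟨-b (n + 4), ?_⟩
  have hbn : δ (n + 3) (b (n + 4)) = w (n + 3) - of X (n + 3) z (n + 3) :=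
    DFinsupp.ext_iff.mp hb (n + 3)
  rw [map_neg, hbn, hw0 _ (by omega), of_eq_same, zero_sub, neg_neg]

end Totalization

section ResolutionTotalization

open DifferentialHomology DirectSum RingTheory.Sequence IsLocalRing

theorem bijective_map_directSumRight {R : Type*} [CommRing R] {X : ℕ → Type*}
    [∀ n, AddCommGroup (X n)] [∀ n, Module R (X n)] {δ : ∀ n, X (n + 1) →ₗ[R] X n}
    {M : Type*} [AddCommGroup M] [Module R M]
    (hd : ∀ z, (shiftMap 1 δ).lTensor M ((shiftMap 1 δ).lTensor M z) = 0) :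
    Function.Bijective (map (TensorProduct.directSumRight R R M X).toLinearMap
      (directSumRight_lTensor_shiftMap δ M)) :=
  map_bijective_of_acyclic_ker _ hd (TensorProduct.directSumRight R R M X).surjective
    fun z hz _ ↦ ⟨0, map_zero _, by
      rw [(LinearEquiv.map_eq_zero_iff (TensorProduct.directSumRight R R M X)).mp hz, map_zero]⟩

universe u

variable {R : Type u} [CommRing R] [IsRegularLocalRing R] {c : ℕ} {x : Fin c → R}

theorem exists_forall_ge_exact_lTensor_add_two (hx : IsWeaklyRegular R (List.ofFn x))
    {F : ℕ → Type*} [∀ n, AddCommGroup (F n)] [∀ n, Module R (F n)] [∀ n, Module.Projective R (F n)]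
    {δ : ∀ n, F (n + 1) →ₗ[R] F n} {N : Type*} [AddCommGroup N] [Module R N] [Module.Finite R N]
    {ε : TensorProduct R (R ⧸ Ideal.span (Set.range x)) (F 0) →ₗ[R] N}
    (hε : Function.Exact ((δ 0).lTensor (R ⧸ Ideal.span (Set.range x))) ε)
    (hδ : ∀ n, Function.Exact ((δ (n + 1)).lTensor (R ⧸ Ideal.span (Set.range x)))
      ((δ n).lTensor (R ⧸ Ideal.span (Set.range x))))
    {M : Type u} [AddCommGroup M] [Module R M] [Module.Finite R M]
    (hM : Ideal.span (Set.range x) ≤ Module.annihilator R M) {k : ℕ}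
    (hk : maximalIdeal R ^ k ≤ Module.annihilator R M ⊔ Module.annihilator R N) :
    ∃ K, ∀ n ≥ K, Function.Exact ((δ (n + 1)).lTensor M) ((δ n).lTensor M) →
      Function.Exact ((δ (n + 3)).lTensor M) ((δ (n + 2)).lTensor M) := by
  have hmem n f : δ n (δ (n + 1) f) ∈ Ideal.span (Set.range x) • (⊤ : Submodule R (F n)) :=
    one_tmul_eq_zero_iff.mp ((hδ n).apply_apply_eq_zero (1 ⊗ₜ f))
  choose s hs using fun n ↦ exists_eq_sum_smul_of_projective (f := δ n ∘ₗ δ (n + 1)) (hmem n)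
  have hd : shiftMap 1 δ * shiftMap 1 δ = ∑ i, x i • shiftMap 2 fun n ↦ s n i := by
    refine LinearMap.ext fun z ↦ DFinsupp.ext fun n ↦ (LinearMap.congr_fun (hs n) _).trans ?_
    exact (LinearMap.sum_apply ..).trans
      ((map_sum (component R ℕ F n) (fun i ↦ x i • shiftMap 2 (fun n ↦ s n i) z) _).symm.trans
        (congrArg (component R ℕ F n) (by rw [LinearMap.sum_apply]; rfl)))
  have hsq {P : Type u} [AddCommGroup P] [Module R P]
      (hP : Ideal.span (Set.range x) ≤ Module.annihilator R P) :=
    lTensor_apply_self (M := P) hd hP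
  have hH := (isFinitePowTorsion_of_resolution
    ⟨inferInstance, 1, (pow_one (Module.annihilator R N)).le⟩ hε hδ).of_injective
    (bijective_map_directSumRight (hsq Ideal.annihilator_quotient.ge)).1
  have hnil i z : ∃ m, ((shiftMap 2 fun n ↦ s n i).lTensor M ^ m) z = 0 :=
    exists_pow_lTensor_apply_eq_zero (exists_pow_shiftMap_apply_eq_zero _ two_ne_zero) z
  have hDCC := stableDCC_lTensor hx hd hM hH hk fun i z _ ↦
    (hnil i z).imp fun m hm ↦ by rw [hm]; exact zero_mem _
  have hcomm i z : shiftMap (X := fun n ↦ TensorProduct R M (F n)) 2 (fun n ↦ (s n i).lTensor M)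
      (shiftMap (X := fun n ↦ TensorProduct R M (F n)) 1 (fun n ↦ (δ n).lTensor M) z) =
      shiftMap (X := fun n ↦ TensorProduct R M (F n)) 1 (fun n ↦ (δ n).lTensor M)
        (shiftMap (X := fun n ↦ TensorProduct R M (F n)) 2 (fun n ↦ (s n i).lTensor M) z) := by
    obtain ⟨z, rfl⟩ := (TensorProduct.directSumRight R R M F).surjective z
    rw [← directSumRight_lTensor_shiftMap, ← directSumRight_lTensor_shiftMap,
      lTensor_apply_comm (isWeaklyRegular_of_flat hx) hd hM i, directSumRight_lTensor_shiftMap,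
      directSumRight_lTensor_shiftMap]
  refine exists_forall_ge_exact_add_two (hcomm := hcomm) (fun n z ↦ ?_)
    (hDCC.of_surjective (bijective_map_directSumRight (hsq hM)).2 fun i h ↦ ?_)
  · rw [← LinearMap.lTensor_comp_apply, lTensor_eq_lTensor_of_forall_sub_mem hM (g := 0),
      LinearMap.lTensor_zero, LinearMap.zero_apply]
    exact fun f ↦ (sub_zero (δ n (δ (n + 1) f))).symm ▸ hmem n f
  · obtain ⟨z, hz, rfl⟩ := exists_cls_eq h
    refine (map_cls ..).trans (cls_eq_cls_iff.mpr ⟨0, ?_⟩)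
    simp [directSumRight_lTensor_shiftMap]

end ResolutionTotalization

section TorResolution

universe u

variable {A : Type u} [CommRing A]

/-- The syzygies of `N` in its canonical free resolution, in which each syzygy is covered by the
free module on its underlying set. -/
noncomputable def freeSyzygy (N : ModuleCat.{u} A) : ℕ → ModuleCat.{u} A
  | 0 => N
  | n + 1 => .of A (LinearMap.ker (Finsupp.linearCombination A (id : freeSyzygy N n → _)))

theorem exists_free_resolution (A : Type u) [CommRing A] (N : Type u) [AddCommGroup N]
    [Module A N] :
    ∃ (ι : ℕ → Type u) (φ : ∀ n, (ι (n + 1) →₀ A) →ₗ[A] (ι n →₀ A)) (ε : (ι 0 →₀ A) →ₗ[A] N),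
      (∀ n, Function.Exact (φ (n + 1)) (φ n)) ∧ Function.Exact (φ 0) ε ∧
        Function.Surjective ε := by
  let syz := freeSyzygy (.of A N)
  let π n : (syz n →₀ A) →ₗ[A] syz n := Finsupp.linearCombination A id
  let i n : syz (n + 1) →ₗ[A] (syz n →₀ A) := (LinearMap.ker (π n)).subtype
  have hπ n : LinearMap.range (π n) = ⊤ :=
    LinearMap.range_eq_top.mpr (Finsupp.linearCombination_id_surjective A (syz n))
  have hrange n : LinearMap.range (i n ∘ₗ π (n + 1)) = LinearMap.ker (π n) :=
    (LinearMap.range_comp_of_range_eq_top _ (hπ (n + 1))).trans (Submodule.range_subtype _)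
  have hker n : LinearMap.ker (i n ∘ₗ π (n + 1)) = LinearMap.ker (π (n + 1)) :=
    LinearMap.ker_comp_of_ker_eq_bot _ (Submodule.ker_subtype _)
  let ε : (syz 0 →₀ A) →ₗ[A] N := π 0
  exact ⟨fun n ↦ syz n, fun n ↦ i n ∘ₗ π (n + 1), ε,
    fun n ↦ LinearMap.exact_iff.mpr ((hker n).trans (hrange (n + 1)).symm),
    LinearMap.exact_iff.mpr (hrange 0).symm, LinearMap.range_eq_top.mp (hπ 0)⟩

variable {N : Type u} [AddCommGroup N] [Module A N] {P : ℕ → Type u} [∀ n, AddCommGroup (P n)]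
  [∀ n, Module A (P n)] {d : ∀ n, P (n + 1) →ₗ[A] P n} {ε : P 0 →ₗ[A] N}

/-- The chain complex of modules with the given differentials. -/
noncomputable def chainComplexOfExact (hd : ∀ n, Function.Exact (d (n + 1)) (d n)) :
    ChainComplex (ModuleCat.{u} A) ℕ :=
  ChainComplex.of (fun n ↦ ModuleCat.of A (P n)) (fun n ↦ ModuleCat.ofHom (d n)) fun n ↦
    ModuleCat.hom_ext (hd n).linearMap_comp_eq_zero

theorem chainComplexOfExact_d (hd : ∀ n, Function.Exact (d (n + 1)) (d n)) (n : ℕ) :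
    (chainComplexOfExact hd).d (n + 1) n = ModuleCat.ofHom (d n) :=
  ChainComplex.of_d (fun n ↦ ModuleCat.of A (P n)) (fun n ↦ ModuleCat.ofHom (d n)) n

theorem exactAt_chainComplexOfExact (hd : ∀ n, Function.Exact (d (n + 1)) (d n)) (n : ℕ) :
    (chainComplexOfExact hd).ExactAt (n + 1) := by
  rw [HomologicalComplex.exactAt_iff' _ (n + 2) (n + 1) n (by simp) (by simp),
    ShortComplex.ShortExact.moduleCat_exact_iff_function_exact]
  change Function.Exact ((chainComplexOfExact hd).d (n + 2) (n + 1)).hom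
    ((chainComplexOfExact hd).d (n + 1) n).hom
  rw [chainComplexOfExact_d, chainComplexOfExact_d]
  exact hd n

/-- The augmentation of `chainComplexOfExact` given by `ε`. -/
noncomputable def augmentationOfExact (hd : ∀ n, Function.Exact (d (n + 1)) (d n))
    (hdε : Function.Exact (d 0) ε) :
    chainComplexOfExact hd ⟶ (ChainComplex.single₀ (ModuleCat.{u} A)).obj (.of A N) :=
  (ChainComplex.toSingle₀Equiv _ _).symm ⟨ModuleCat.ofHom ε, by
    rw [chainComplexOfExact_d]
    exact ModuleCat.hom_ext hdε.linearMap_comp_eq_zero⟩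

theorem quasiIsoAt_zero_augmentationOfExact (hd : ∀ n, Function.Exact (d (n + 1)) (d n))
    (hdε : Function.Exact (d 0) ε) (hε : Function.Surjective ε) :
    QuasiIsoAt (augmentationOfExact hd hdε) 0 := by
  rw [ChainComplex.quasiIsoAt₀_iff, ShortComplex.quasiIso_iff_of_zeros' _ rfl rfl rfl]
  let T := ShortComplex.mk (ModuleCat.ofHom (d 0)) (ModuleCat.ofHom ε)
    (ModuleCat.hom_ext hdε.linearMap_comp_eq_zero)
  have hT : T.Exact ∧ Epi T.g :=
    ⟨(ShortComplex.ShortExact.moduleCat_exact_iff_function_exact T).mpr hdε,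
      (ModuleCat.epi_iff_surjective _).mpr hε⟩
  refine (ShortComplex.exact_and_epi_g_iff_of_iso ?_).2 hT
  exact ShortComplex.isoMk (Iso.refl _) (Iso.refl _) (Iso.refl _)
    (by
      simp only [Iso.refl_hom, HomologicalComplex.shortComplexFunctor'_obj_f,
        chainComplexOfExact_d, T]
      rfl)
    (by
      simp only [augmentationOfExact, Iso.refl_hom,
        HomologicalComplex.shortComplexFunctor'_map_τ₂, T]
      rfl)

/-- An exact sequence of projective modules `⋯ → P 1 → P 0 → N → 0`, as a projective resolution. -/
noncomputable def projectiveResolutionOfExact [∀ n, Module.Projective A (P n)]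
    (hd : ∀ n, Function.Exact (d (n + 1)) (d n)) (hdε : Function.Exact (d 0) ε)
    (hε : Function.Surjective ε) : ProjectiveResolution (ModuleCat.of A N) where
  complex := chainComplexOfExact hd
  projective n := inferInstanceAs (Projective (ModuleCat.of A (P n)))
  π := augmentationOfExact hd hdε
  quasiIso := ⟨fun
    | 0 => quasiIsoAt_zero_augmentationOfExact hd hdε hε
    | n + 1 => (quasiIsoAt_iff_exactAt' _ _ (ChainComplex.exactAt_succ_single_obj ..)).mpr
        (exactAt_chainComplexOfExact hd n)⟩

theorem subsingleton_tor_succ_iff_exact [∀ n, Module.Projective A (P n)]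
    (hd : ∀ n, Function.Exact (d (n + 1)) (d n)) (hdε : Function.Exact (d 0) ε)
    (hε : Function.Surjective ε) (M : Type u) [AddCommGroup M] [Module A M] (n : ℕ) :
    Subsingleton (((Tor (ModuleCat.{u} A) (n + 1)).obj (.of A M)).obj (.of A N)) ↔
      Function.Exact ((d (n + 1)).lTensor M) ((d n).lTensor M) := by
  let T := (MonoidalCategory.tensoringLeft (ModuleCat.{u} A)).obj (.of A M)
  let C := (T.mapHomologicalComplex _).obj (chainComplexOfExact hd)
  have iso : ((Tor (ModuleCat.{u} A) (n + 1)).obj (.of A M)).obj (.of A N) ≅ C.homology (n + 1) :=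
    (projectiveResolutionOfExact hd hdε hε).isoLeftDerivedObj T (n + 1)
  have hC n : (C.d (n + 1) n).hom = (d n).lTensor M := by
    change (T.map ((chainComplexOfExact hd).d (n + 1) n)).hom = _
    rw [chainComplexOfExact_d]
    rfl
  rw [← ModuleCat.isZero_iff_subsingleton, iso.isZero_iff,
    ← HomologicalComplex.exactAt_iff_isZero_homology,
    HomologicalComplex.exactAt_iff' _ (n + 2) (n + 1) n (by simp) (by simp),
    ShortComplex.ShortExact.moduleCat_exact_iff_function_exact, ← hC, ← hC]
  exact Iff.rfl

end TorResolution

section FiniteLength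

open IsLocalRing

theorem exists_maximalIdeal_pow_le_annihilator_of_isFiniteLength {A T : Type*} [CommRing A]
    [IsLocalRing A] [AddCommGroup T] [Module A T] (hT : IsFiniteLength A T) :
    ∃ k, maximalIdeal A ^ k ≤ Module.annihilator A T := by
  obtain ⟨_, _⟩ := isFiniteLength_iff_isNoetherian_isArtinian.mp hT
  obtain ⟨k, hk⟩ := IsArtinian.monotone_stabilizes
    ⟨fun n ↦ OrderDual.toDual (maximalIdeal A ^ n • (⊤ : Submodule A T)),
      fun _ _ h ↦ Submodule.smul_mono_left (Ideal.pow_le_pow_right h)⟩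
  have hstable : maximalIdeal A ^ k • (⊤ : Submodule A T) =
      maximalIdeal A • maximalIdeal A ^ k • (⊤ : Submodule A T) := by
    rw [← mul_smul, ← pow_succ']
    exact hk (k + 1) k.le_succ
  refine ⟨k, ?_⟩
  rw [← Submodule.annihilator_top, Submodule.le_annihilator_iff]
  exact Submodule.eq_bot_of_le_smul_of_le_jacobson_bot _ _ (IsNoetherian.noetherian _) hstable.le
    (maximalIdeal_le_jacobson ⊥)

theorem annihilator_le_iff_nontrivial_residueField_tensorProduct {A T : Type*} [CommRing A]
    [AddCommGroup T] [Module A T] [Module.Finite A T] (p : PrimeSpectrum A) :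
    Module.annihilator A T ≤ p.asIdeal ↔
      Nontrivial (TensorProduct A p.asIdeal.ResidueField T) := by
  rw [← Module.mem_support_iff_nontrivial_residueField_tensorProduct, Module.support_eq_zeroLocus]
  exact Iff.rfl

theorem annihilator_tensorProduct_le_radical (A M N : Type*) [CommRing A] [AddCommGroup M]
    [Module A M] [Module.Finite A M] [AddCommGroup N] [Module A N] [Module.Finite A N] :
    Module.annihilator A (TensorProduct A M N) ≤
      (Module.annihilator A M ⊔ Module.annihilator A N).radical := by
  rw [Ideal.radical_eq_sInf]
  refine le_sInf fun q ⟨hq, hqp⟩ ↦ ?_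
  let p : PrimeSpectrum A := ⟨q, hqp⟩
  have _ := (annihilator_le_iff_nontrivial_residueField_tensorProduct p).mp
    (le_sup_left.trans hq : Module.annihilator A M ≤ q)
  have _ := (annihilator_le_iff_nontrivial_residueField_tensorProduct p).mp
    (le_sup_right.trans hq : Module.annihilator A N ≤ q)
  refine (annihilator_le_iff_nontrivial_residueField_tensorProduct p).mpr ?_
  rw [(TensorProduct.AlgebraTensorModule.distribBaseChange A p.asIdeal.ResidueField M
    N).nontrivial_congr]
  infer_instance

theorem exists_maximalIdeal_pow_le_annihilator_sup {A M N : Type*} [CommRing A]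
    [IsNoetherianRing A] [IsLocalRing A] [AddCommGroup M] [Module A M] [Module.Finite A M]
    [AddCommGroup N] [Module A N] [Module.Finite A N]
    (h : IsFiniteLength A (TensorProduct A M N)) :
    ∃ k, maximalIdeal A ^ k ≤ Module.annihilator A M ⊔ Module.annihilator A N := by
  obtain ⟨k, hk⟩ := exists_maximalIdeal_pow_le_annihilator_of_isFiniteLength h
  obtain ⟨l, hl⟩ := Ideal.exists_radical_pow_le_of_fg
    (Module.annihilator A M ⊔ Module.annihilator A N) (IsNoetherian.noetherian _)
  refine ⟨k * l, ?_⟩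
  rw [pow_mul]
  exact (Ideal.pow_right_mono (hk.trans (annihilator_tensorProduct_le_radical A M N)) l).trans hl

variable (A B M N : Type*) [CommRing A] [CommRing B] [Algebra A B] [AddCommGroup M] [Module A M]
  [AddCommGroup N] [Module A N]

theorem map_annihilator_le :
    (Module.annihilator A M).map (algebraMap A B) ≤
      Module.annihilator B (TensorProduct A B M) := by
  rw [Ideal.map_le_iff_le_comap, Module.comap_annihilator]
  exact (annihilator_le_annihilator_tensorProduct A M B).trans_eq
    (TensorProduct.comm A M B).annihilator_eq

variable {A B M N}

theorem pow_le_annihilator_tensorProduct_sup {S : Type*} [CommRing S] [Algebra S B]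
    [SMulCommClass A S B] (hS : Function.Surjective (algebraMap S B)) {p : Ideal S} {q : Ideal A}
    (hpq : p.map (algebraMap S B) ≤ q.map (algebraMap A B)) {k : ℕ}
    (hq : q ^ k ≤ Module.annihilator A M ⊔ Module.annihilator A N) :
    p ^ k ≤ Module.annihilator S (TensorProduct A B M) ⊔
      Module.annihilator S (TensorProduct A B N) := by
  have hmap : (p ^ k).map (algebraMap S B) ≤ Module.annihilator B (TensorProduct A B M) ⊔
      Module.annihilator B (TensorProduct A B N) := by
    rw [Ideal.map_pow]
    refine (Ideal.pow_right_mono hpq k).trans ?_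
    rw [← Ideal.map_pow]
    refine (Ideal.map_mono hq).trans ?_
    rw [Ideal.map_sup]
    exact sup_le_sup (map_annihilator_le ..) (map_annihilator_le ..)
  intro s hs
  obtain ⟨a, ha, b, hb, hab⟩ := Submodule.mem_sup.mp (hmap (Ideal.mem_map_of_mem _ hs))
  obtain ⟨a, rfl⟩ := hS a
  rw [← add_sub_cancel a s]
  refine Submodule.add_mem_sup ?_ ?_
  · rwa [← Module.comap_annihilator (R := B)]
  · rwa [← Module.comap_annihilator (R := B), Ideal.mem_comap, map_sub, ← hab, add_sub_cancel_left]

end FiniteLength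

section FreeComparison

open TensorProduct

variable {A S B : Type*} [CommRing A] [CommRing S] [CommRing B] [Algebra A B] [Algebra S B]

open scoped Classical in
/-- Over rings `A` and `S` mapping to `B`, a `B`-module tensored with the free module on `ι` does
not depend on whether the free module is taken over `S` or over `A`. -/
noncomputable def tensorFinsuppEquiv (A S B M ι : Type*) [CommRing A] [CommRing S] [CommRing B]
    [Algebra A B] [Algebra S B] [AddCommGroup M] [Module A M] [Module S M] [Module B M]
    [IsScalarTower A B M] [IsScalarTower S B M] : M ⊗[S] (ι →₀ S) ≃ₗ[B] M ⊗[A] (ι →₀ A) :=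
  finsuppScalarRight S B M ι ≪≫ₗ (finsuppScalarRight A B M ι).symm

variable {M : Type*} [AddCommGroup M] [Module A M] [Module S M] [Module B M] [IsScalarTower A B M]
  [IsScalarTower S B M] {ι κ : Type*} {f : (ι →₀ S) →ₗ[S] (κ →₀ S)} {g : (ι →₀ A) →ₗ[A] (κ →₀ A)}

theorem finsuppScalarRight_tensorFinsuppEquiv [DecidableEq ι] (z : M ⊗[S] (ι →₀ S)) :
    finsuppScalarRight A B M ι (tensorFinsuppEquiv A S B M ι z) = finsuppScalarRight S B M ι z := by
  simp only [tensorFinsuppEquiv, LinearEquiv.trans_apply]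
  convert LinearEquiv.apply_symm_apply (finsuppScalarRight A B M ι) _

theorem tensorFinsuppEquiv_tmul_single (m : M) (i : ι) (s : S) :
    tensorFinsuppEquiv A S B M ι (m ⊗ₜ Finsupp.single i s) = (s • m) ⊗ₜ Finsupp.single i 1 := by
  classical
  rw [tensorFinsuppEquiv, LinearEquiv.trans_apply, finsuppScalarRight_apply_tmul,
    Finsupp.sum_single_index (by simp), finsuppScalarRight_symm_apply_single]

theorem tensorFinsuppEquiv_lTensor
    (hfg : ∀ i k, algebraMap S B (f (Finsupp.single i 1) k) =
      algebraMap A B (g (Finsupp.single i 1) k)) (z : M ⊗[S] (ι →₀ S)) :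
    tensorFinsuppEquiv A S B M κ (f.lTensor M z) =
      g.lTensor M (tensorFinsuppEquiv A S B M ι z) := by
  classical
  induction z with
  | zero => simp only [map_zero]
  | add z w hz hw => simp only [map_add, hz, hw]
  | tmul m p =>
    induction p using Finsupp.induction_linear with
    | zero => simp only [tmul_zero, map_zero]
    | add p q hp hq => simp only [tmul_add, map_add, hp, hq]
    | single i s =>
      refine (finsuppScalarRight A B M κ).injective (Finsupp.ext fun k ↦ ?_)
      rw [finsuppScalarRight_tensorFinsuppEquiv, tensorFinsuppEquiv_tmul_single,
        LinearMap.lTensor_tmul, LinearMap.lTensor_tmul, finsuppScalarRight_apply_tmul_apply,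
        finsuppScalarRight_apply_tmul_apply, ← mul_one s, ← smul_eq_mul, ← Finsupp.smul_single,
        map_smul, Finsupp.smul_apply, smul_eq_mul, mul_comm, mul_smul,
        ← algebraMap_smul B (f _ k), hfg, algebraMap_smul, smul_eq_mul, mul_one]

theorem exact_lTensor_iff_of_algebraMap_eq {μ : Type*} {f' : (κ →₀ S) →ₗ[S] (μ →₀ S)}
    {g' : (κ →₀ A) →ₗ[A] (μ →₀ A)}
    (hfg : ∀ i k, algebraMap S B (f (Finsupp.single i 1) k) =
      algebraMap A B (g (Finsupp.single i 1) k))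
    (hfg' : ∀ i k, algebraMap S B (f' (Finsupp.single i 1) k) =
      algebraMap A B (g' (Finsupp.single i 1) k)) :
    Function.Exact (f.lTensor M) (f'.lTensor M) ↔ Function.Exact (g.lTensor M) (g'.lTensor M) :=
  .symm <| Function.Exact.iff_of_ladder_addEquiv
    (f₁₂ := (f.lTensor M).toAddMonoidHom) (f₂₃ := (f'.lTensor M).toAddMonoidHom)
    (g₁₂ := (g.lTensor M).toAddMonoidHom) (g₂₃ := (g'.lTensor M).toAddMonoidHom)
    (tensorFinsuppEquiv A S B M ι).toAddEquiv (tensorFinsuppEquiv A S B M κ).toAddEquiv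
    (tensorFinsuppEquiv A S B M μ).toAddEquiv
    (AddMonoidHom.ext fun z ↦ (tensorFinsuppEquiv_lTensor hfg z).symm)
    (AddMonoidHom.ext fun z ↦ (tensorFinsuppEquiv_lTensor hfg' z).symm)

theorem exists_linearMap_algebraMap_eq (hS : Function.Surjective (algebraMap S B))
    (g : (ι →₀ A) →ₗ[A] (κ →₀ A)) :
    ∃ f : (ι →₀ S) →ₗ[S] (κ →₀ S), ∀ i k, algebraMap S B (f (Finsupp.single i 1) k) =
      algebraMap A B (g (Finsupp.single i 1) k) := by
  have hlift i : ∃ v : κ →₀ S, v.mapRange (algebraMap S B) (map_zero _) =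
      (g (Finsupp.single i 1)).mapRange (algebraMap A B) (map_zero _) :=
    Finsupp.mapRange_surjective _ (map_zero _) hS _
  choose v hv using hlift
  refine ⟨Finsupp.linearCombination S v, fun i k ↦ ?_⟩
  rw [Finsupp.linearCombination_single, one_smul]
  exact DFunLike.congr_fun (hv i) k

theorem exists_exact_lTensor_augmentation [Module.Flat A B] [SMulCommClass A S B]
    {N : Type*} [AddCommGroup N] [Module A N] {ε : (κ →₀ A) →ₗ[A] N}
    (hfg : ∀ i k, algebraMap S B (f (Finsupp.single i 1) k) =
      algebraMap A B (g (Finsupp.single i 1) k)) (h : Function.Exact g ε) :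
    ∃ ε' : B ⊗[S] (κ →₀ S) →ₗ[S] B ⊗[A] N, Function.Exact (f.lTensor B) ε' := by
  refine ⟨(AlgebraTensorModule.lTensor B B ε ∘ₗ
    (tensorFinsuppEquiv A S B B κ).toLinearMap).restrictScalars S, fun z ↦ ?_⟩
  refine (Module.Flat.lTensor_exact B h (tensorFinsuppEquiv A S B B κ z)).trans
    ⟨fun ⟨w, hw⟩ ↦ ?_, fun ⟨w, hw⟩ ↦ ⟨tensorFinsuppEquiv A S B B ι w, ?_⟩⟩
  · obtain ⟨w, rfl⟩ := (tensorFinsuppEquiv A S B B ι).surjective w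
    rw [← tensorFinsuppEquiv_lTensor hfg] at hw
    exact ⟨w, (tensorFinsuppEquiv A S B B κ).injective hw⟩
  · rw [← tensorFinsuppEquiv_lTensor hfg, hw]

end FreeComparison

theorem exact_lTensor_tensorProduct_iff {A B M P Q T : Type*} [CommRing A] [CommRing B]
    [Algebra A B] [Module.FaithfullyFlat A B] [AddCommGroup M] [Module A M] [AddCommGroup P]
    [Module A P] [AddCommGroup Q] [Module A Q] [AddCommGroup T] [Module A T] {f : P →ₗ[A] Q}
    {g : Q →ₗ[A] T} :
    Function.Exact (f.lTensor (TensorProduct A B M)) (g.lTensor (TensorProduct A B M)) ↔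
      Function.Exact (f.lTensor M) (g.lTensor M) := by
  rw [← Module.FaithfullyFlat.lTensor_exact_iff_exact A B]
  refine (Function.Exact.iff_of_ladder_linearEquiv (e₁ := TensorProduct.assoc A B M _)
    (e₂ := TensorProduct.assoc A B M _) (e₃ := TensorProduct.assoc A B M _) ?_ ?_).symm
  · rw [LinearMap.lTensor_tensor]
    ext
    simp
  · rw [LinearMap.lTensor_tensor]
    ext
    simp

section TorPeriodicity

open IsLocalRing RingTheory.Sequence

theorem exact_lTensor_congr {R P Q L₁ L₂ L₃ : Type*} [CommRing R] [AddCommGroup P] [Module R P]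
    [AddCommGroup Q] [Module R Q] [AddCommGroup L₁] [Module R L₁] [AddCommGroup L₂] [Module R L₂]
    [AddCommGroup L₃] [Module R L₃] (e : P ≃ₗ[R] Q) {f : L₁ →ₗ[R] L₂} {g : L₂ →ₗ[R] L₃} :
    Function.Exact (f.lTensor P) (g.lTensor P) ↔ Function.Exact (f.lTensor Q) (g.lTensor Q) :=
  .symm <| Function.Exact.iff_of_ladder_linearEquiv (e₁ := e.rTensor L₁) (e₂ := e.rTensor L₂)
    (e₃ := e.rTensor L₃) (TensorProduct.ext' fun _ _ ↦ rfl) (TensorProduct.ext' fun _ _ ↦ rfl)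

universe u

variable {A S B : Type u} [CommRing A] [CommRing S] [IsRegularLocalRing S] {c : ℕ} {x : Fin c → S}
  [CommRing B] [Algebra S B] [Algebra A B] [Module.FaithfullyFlat A B]
  {M N : Type u} [AddCommGroup M] [Module A M] [Module.Finite A M]
  [AddCommGroup N] [Module A N] [Module.Finite A N]

theorem exists_forall_ge_subsingleton_tor_add_two (hx : IsWeaklyRegular S (List.ofFn x))
    (hS : Function.Surjective (algebraMap S B))
    (hker : RingHom.ker (algebraMap S B) = Ideal.span (Set.range x)) {I : Ideal A}
    (hI : (maximalIdeal S).map (algebraMap S B) ≤ I.map (algebraMap A B)) {k : ℕ}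
    (hk : I ^ k ≤ Module.annihilator A M ⊔ Module.annihilator A N) :
    ∃ K, ∀ n ≥ K,
      Subsingleton (((Tor (ModuleCat.{u} A) n).obj (.of A M)).obj (.of A N)) →
        Subsingleton (((Tor (ModuleCat.{u} A) (n + 2)).obj (.of A M)).obj (.of A N)) := by
  have _ : SMulCommClass A S B := ⟨fun a s b ↦ by
    simp only [Algebra.smul_def, mul_left_comm]⟩
  let e : (S ⧸ Ideal.span (Set.range x)) ≃ₗ[S] B :=
    Submodule.quotEquivOfEq _ _ hker.symm ≪≫ₗ (Algebra.linearMap S B).quotKerEquivOfSurjective hS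
  obtain ⟨ι, φ, ε, hφ, hφε, hε⟩ := exists_free_resolution A N
  choose δ hδ using fun n ↦ exists_linearMap_algebraMap_eq hS (φ n)
  obtain ⟨ε', hε'⟩ := exists_exact_lTensor_augmentation (hδ 0) hφε
  have hresolution n := (exact_lTensor_congr e).mpr <|
    (exact_lTensor_iff_of_algebraMap_eq (hδ (n + 1)) (hδ n)).mpr
      (Module.Flat.lTensor_exact B (hφ n))
  have hε'e : Function.Exact ((δ 0).lTensor (S ⧸ Ideal.span (Set.range x)))
      (ε' ∘ₗ (e.rTensor (ι 0 →₀ S)).toLinearMap) :=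
    (Function.Exact.iff_of_ladder_linearEquiv (f₂₃ := ε' ∘ₗ (e.rTensor (ι 0 →₀ S)).toLinearMap)
      (e₁ := e.rTensor _) (e₂ := e.rTensor _) (e₃ := .refl S _)
      (TensorProduct.ext' fun _ _ ↦ rfl) rfl).mp hε'
  have hann : Ideal.span (Set.range x) ≤ Module.annihilator S (TensorProduct A B M) := by
    rw [← hker, ← Module.comap_annihilator (R := B)]
    exact Ideal.comap_mono bot_le
  have _ : Module.Finite S B := .of_surjective (Algebra.linearMap S B) hS
  have _ : Module.Finite S (TensorProduct A B M) := .trans B _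
  have _ : Module.Finite S (TensorProduct A B N) := .trans B _
  obtain ⟨K, hK⟩ := exists_forall_ge_exact_lTensor_add_two (F := fun n ↦ ι n →₀ S)
    (M := TensorProduct A B M) (N := TensorProduct A B N) hx hε'e hresolution hann
    (pow_le_annihilator_tensorProduct_sup hS hI hk)
  have htor n : Subsingleton (((Tor (ModuleCat.{u} A) (n + 1)).obj (.of A M)).obj (.of A N)) ↔
      Function.Exact ((δ (n + 1)).lTensor (TensorProduct A B M))
        ((δ n).lTensor (TensorProduct A B M)) := by
    rw [exact_lTensor_iff_of_algebraMap_eq (hδ _) (hδ n), exact_lTensor_tensorProduct_iff]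
    exact subsingleton_tor_succ_iff_exact (P := fun n ↦ ι n →₀ A) hφ hφε hε M n
  refine ⟨K + 1, fun n hn h ↦ ?_⟩
  obtain ⟨n, rfl⟩ := Nat.exists_eq_add_of_le' (Nat.one_le_of_lt hn)
  exact (htor (n + 2)).mpr (hK n (Nat.le_of_succ_le_succ hn) ((htor n).mp h))

end TorPeriodicity

theorem forall_ge_or_forall_even_not_or_forall_odd_not {p : ℕ → Prop} {K : ℕ}
    (hp : ∀ n ≥ K, p n → p (n + 2)) :
    (∃ m, ∀ n ≥ m, p n) ∨
      ∃ m, (∀ n ≥ m, Even n → ¬p n) ∨ (∀ n ≥ m, Odd n → ¬p n) := by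
  have hadd {a : ℕ} (ha : K ≤ a) (hpa : p a) (b : ℕ) : p (a + 2 * b) := by
    induction b with
    | zero => exact hpa
    | succ b ih => exact hp (a + 2 * b) (ha.trans (Nat.le_add_right ..)) ih
  refine or_iff_not_imp_right.mpr fun hnot ↦ ?_
  push Not at hnot
  obtain ⟨⟨a, ha, haeven, hpa⟩, b, hb, hbodd, hpb⟩ := hnot K
  refine ⟨max a b, fun n hn ↦ ?_⟩
  rcases Nat.even_or_odd n with hn_even | hn_odd
  · obtain ⟨k, rfl⟩ : ∃ k, n = a + 2 * k := ⟨(n - a) / 2, by grind⟩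
    exact hadd ha hpa k
  · obtain ⟨k, rfl⟩ : ∃ k, n = b + 2 * k := ⟨(n - b) / 2, by grind⟩
    exact hadd hb hpb k

theorem isRegularLocalRing_of_card_eq_ringKrullDim {S : Type*} [CommRing S] [IsNoetherianRing S]
    [IsLocalRing S] {gen : Finset S} (hgen : IsLocalRing.maximalIdeal S = Ideal.span ↑gen)
    (hcard : (gen.card : WithBot (WithTop ℕ)) = ringKrullDim S) : IsRegularLocalRing S := by
  refine .of_spanFinrank_maximalIdeal_le _ ?_
  rw [← hcard, hgen]
  exact Nat.cast_le (α := WithBot ℕ∞).mpr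
    ((Submodule.spanFinrank_span_le_ncard_of_finite gen.finite_toSet).trans_eq
      (Set.ncard_coe_finset gen))

open IsLocalRing in
theorem map_maximalIdeal_le_of_surjective {A S : Type*} [CommRing A] [IsNoetherianRing A]
    [IsLocalRing A] [CommRing S] [IsLocalRing S] [Algebra S (AdicCompletion (maximalIdeal A) A)]
    (hS : Function.Surjective (algebraMap S (AdicCompletion (maximalIdeal A) A))) :
    (maximalIdeal S).map (algebraMap S (AdicCompletion (maximalIdeal A) A)) ≤
      (maximalIdeal A).map (algebraMap A (AdicCompletion (maximalIdeal A) A)) := by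
  rw [← AdicCompletion.maximalIdeal_eq_map, Ideal.map_le_iff_le_comap]
  have _ := Ideal.comap_isMaximal_of_surjective _ hS (K := maximalIdeal _)
  exact (eq_maximalIdeal ‹_›).ge

universe u in
theorem stmt_9_general {A S B : Type u} [CommRing A] [IsNoetherianRing A] [IsLocalRing A]
    [CommRing S] [IsRegularLocalRing S] {c : ℕ} {x : Fin c → S}
    (hx : RingTheory.Sequence.IsWeaklyRegular S (List.ofFn x)) [CommRing B] [Algebra S B]
    (hS : Function.Surjective (algebraMap S B))
    (hker : RingHom.ker (algebraMap S B) = Ideal.span (Set.range x)) [Algebra A B]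
    [Module.FaithfullyFlat A B]
    (hmax : (IsLocalRing.maximalIdeal S).map (algebraMap S B) ≤
      (IsLocalRing.maximalIdeal A).map (algebraMap A B))
    {M N : Type u} [AddCommGroup M] [Module A M] [Module.Finite A M]
    [AddCommGroup N] [Module A N] [Module.Finite A N]
    (hfl : IsFiniteLength A (TensorProduct A M N)) :
    (∃ m₀ : ℕ, ∀ n ≥ m₀,
      Subsingleton (((Tor (ModuleCat.{u} A) n).obj (.of A M)).obj (.of A N))) ∨
    ∃ m₀ : ℕ, (∀ n ≥ m₀, Even n →
      Nontrivial (((Tor (ModuleCat.{u} A) n).obj (.of A M)).obj (.of A N))) ∨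
      (∀ n ≥ m₀, Odd n →
        Nontrivial (((Tor (ModuleCat.{u} A) n).obj (.of A M)).obj (.of A N))) := by
  obtain ⟨k, hk⟩ := exists_maximalIdeal_pow_le_annihilator_sup hfl
  obtain ⟨K, hK⟩ := exists_forall_ge_subsingleton_tor_add_two hx hS hker hmax hk
  simp only [← not_subsingleton_iff_nontrivial]
  exact forall_ge_or_forall_even_not_or_forall_odd_not hK

/-- Let `A` be a commutative Noetherian local complete intersection ring
(the maximal-ideal-adic completion of `A` is `S/(x 1, …, x c)` for a regular local ring
`S` and a regular sequence `x` in its maximal ideal).  Let `M, N` be finitely generated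
`A`-modules such that `M ⊗_A N` has finite length.  Then either `Tor_n^A(M,N) = 0` for
all `n ≫ 0`, or there is `m₀ ≥ 0` such that `Tor_n^A(M,N) ≠ 0` for all even `n ≥ m₀`,
or for all odd `n ≥ m₀`. -/
theorem stmt_9 (A : Type) [CommRing A] [IsNoetherianRing A] [IsLocalRing A]
    (S : Type) [CommRing S] [IsNoetherianRing S] [IsLocalRing S]
    (hreg : ∃ gen : Finset S, IsLocalRing.maximalIdeal S = Ideal.span ↑gen ∧
      (gen.card : WithBot (WithTop ℕ)) = ringKrullDim S)
    (c : ℕ) (x : Fin c → S)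
    (hxm : ∀ i, x i ∈ IsLocalRing.maximalIdeal S)
    (hxreg : RingTheory.Sequence.IsRegular S (List.ofFn x))
    (hcompl : Nonempty
      ((AdicCompletion (IsLocalRing.maximalIdeal A) A) ≃+* S ⧸ Ideal.span (Set.range x)))
    (M N : Type) [AddCommGroup M] [Module A M] [Module.Finite A M]
    [AddCommGroup N] [Module A N] [Module.Finite A N]
    (hfl : IsFiniteLength A (TensorProduct A M N)) :
    (∃ m₀ : ℕ, ∀ n ≥ m₀, Subsingleton (torGroup A M N n)) ∨
    ∃ m₀ : ℕ, (∀ n ≥ m₀, Even n → Nontrivial (torGroup A M N n)) ∨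
      (∀ n ≥ m₀, Odd n → Nontrivial (torGroup A M N n)) := by
  obtain ⟨gen, hgen, hcard⟩ := hreg
  obtain ⟨e⟩ := hcompl
  have _ := isRegularLocalRing_of_card_eq_ringKrullDim hgen hcard
  have _ : Module.FaithfullyFlat A (AdicCompletion (IsLocalRing.maximalIdeal A) A) :=
    .of_flat_of_isLocalHom
  let f := e.symm.toRingHom.comp (Ideal.Quotient.mk (Ideal.span (Set.range x)))
  let _ := f.toAlgebra
  have hf : Function.Surjective f := e.symm.surjective.comp Ideal.Quotient.mk_surjective
  have hker : RingHom.ker f = Ideal.span (Set.range x) :=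
    (RingHom.ker_comp_of_injective _ e.symm.injective).trans Ideal.mk_ker
  exact stmt_9_general hxreg.1 hf hker (map_maximalIdeal_le_of_surjective hf) hfl
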